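/- Let d > 3 be an integer, ε ≠ 0 and τ ∈ ℝ. Let V : ℝ^d → ℝ be nonnegative, continuously differentiable away from the origin, and suppose there exist γ > 0 and η > 0 such that γ·V(x) + |x|·∂_rV(x) ≤ (1−η)(d−1)(d−3)/(2|x|²) for all x ≠ 0. If u is a classical solution of −Δu + V u ± iεu − τu = f on ℝ^d with u, ∇u ∈ L²(ℝ^d) and f ∈ L²(ℝ^d), then ‖∇u‖²_X + max{0,τ}·‖u‖²_X + (d−3)∫_{ℝ^d} |u(x)|²/|x|³ dx + ∫_{ℝ^d} (V(x)/|x|)|u(x)|² dx + sup_{R>0} R^{−3}∫_{B(0,R)} |u(x)|² dx ≤ C‖f‖²_{X*}, where C depends only on d, γ, η and is independent of ε and τ. -/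

import Mathlib

noncomputable section
open MeasureTheory Metric Set ENNReal

abbrev Ed (d : ℕ) := EuclideanSpace ℝ (Fin d)

/-- partial derivative of a complex valued function -/
def pd {d : ℕ} (u : Ed d → ℂ) (i : Fin d) (x : Ed d) : ℂ :=
  fderiv ℝ u x (EuclideanSpace.single i 1)

/-- Laplacian of a complex valued function -/
def lap {d : ℕ} (u : Ed d → ℂ) (x : Ed d) : ℂ :=
  ∑ i, fderiv ℝ (pd u i) x (EuclideanSpace.single i 1)

/-- squared norm of the gradient, as an extended nonnegative real -/
def gradSq {d : ℕ} (u : Ed d → ℂ) (x : Ed d) : ℝ≥0∞ :=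
  ∑ i, (‖pd u i x‖₊ : ℝ≥0∞) ^ 2

/-- |u(x)|² as an extended nonnegative real -/
def usq {d : ℕ} (u : Ed d → ℂ) (x : Ed d) : ℝ≥0∞ := (‖u x‖₊ : ℝ≥0∞) ^ 2

/-- radial derivative ∂_r V (x) = (x/|x|)·∇V(x) -/
def radialDeriv {d : ℕ} (V : Ed d → ℝ) (x : Ed d) : ℝ :=
  fderiv ℝ V x x / ‖x‖

/-- Morrey–Campanato type quantity sup_{R>0} (1/R) ∫_{B(0,R)} g -/
def nX2 {d : ℕ} (g : Ed d → ℝ≥0∞) : ℝ≥0∞ :=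
  ⨆ (R : ℝ) (_ : 0 < R), (ENNReal.ofReal R)⁻¹ * ∫⁻ x in ball (0 : Ed d) R, g x

/-- dyadic shell C_j -/
def shell (d : ℕ) (j : ℤ) : Set (Ed d) := {x | (2:ℝ)^j < ‖x‖ ∧ ‖x‖ ≤ (2:ℝ)^(j+1)}

/-- the dual norm ‖f‖_{X*} applied to g = |f|² -/
def nXstar {d : ℕ} (g : Ed d → ℝ≥0∞) : ℝ≥0∞ :=
  ∑' j : ℤ, (ENNReal.ofReal ((2:ℝ)^(j+1)) * ∫⁻ x in shell d j, g x) ^ (1/2 : ℝ)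

/-- the index j₀ with 2^{j₀} < ρ ≤ 2^{j₀+1} -/
def jIdx (ρ : ℝ) : ℤ := ⌈Real.logb 2 ρ⌉ - 1

/-- sup_{R ≥ ρ} (1/R)∫_{B(0,R)} g -/
def nX2r {d : ℕ} (ρ : ℝ) (g : Ed d → ℝ≥0∞) : ℝ≥0∞ :=
  ⨆ (R : ℝ) (_ : ρ ≤ R), (ENNReal.ofReal R)⁻¹ * ∫⁻ x in ball (0 : Ed d) R, g x

/-- the dual norm ‖f‖_{X*_ρ} applied to g = |f|² -/
def nXstarr {d : ℕ} (ρ : ℝ) (g : Ed d → ℝ≥0∞) : ℝ≥0∞ :=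
  (∑' j : {j : ℤ // jIdx ρ ≤ j},
    (ENNReal.ofReal ((2:ℝ)^((j:ℤ)+1)) * ∫⁻ x in shell d (j:ℤ), g x) ^ (1/2 : ℝ))
  + (ENNReal.ofReal ρ * ∫⁻ x in ball (0 : Ed d) ρ, g x) ^ (1/2 : ℝ)

/-- integral of g over the sphere of radius R w.r.t. (d-1)-dimensional Hausdorff measure -/
def sphInt {d : ℕ} (R : ℝ) (g : Ed d → ℝ≥0∞) : ℝ≥0∞ :=
  ∫⁻ x in Metric.sphere (0 : Ed d) R, g x ∂(μH[(d:ℝ) - 1])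

/-!
This is the Morawetz multiplier method. Every integration by parts takes the following form: if
`H ≥ 0` and `H ≤ Q + div P` away from the origin, with `Q` and `P / |x|` integrable, then
`∫ H ≤ ∫ Q`. Logarithmic cutoffs at the origin and at infinity have gradient `O(1/(n|x|))`, so they
disappear in the limit; integrability of `H` is a conclusion, which is how `∫ V|u|²` is seen to be
finite.

With the weight `a = (δ² + |x|²)^{-1/2}`, pairing the equation with `a x·∇u + b u`, where `2b` is
the divergence of `a x`, and using the repulsivity condition gives
`∫ δ²a³|∇u|² + (γ/2) ∫ aV|u|² + ηκ ∫ a|u|²/|x|² ≤ G + κ ∫ (a/|x|² - a³)|u|²`,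
where `κ = (d-1)(d-3)/4` and `G = ∫ |f||∇u| + (d/2) ∫ |f||u|/|x| + |ε| ∫ |u||∇u|`.
Letting `δ → 0` removes the last integral and bounds `∫ V|u|²/|x|` and `∫ |u|²/|x|³` by `C G`.
Taking `δ = R`, where `δ²a³` is at least `1/(3R)` on the ball of radius `R`, then bounds `‖∇u‖²_X`
by `C G`. The real and imaginary parts of the equation multiplied by `δ²a³ ū` bound
`(max 0 τ + |ε|) ‖u‖²_X` by `C G`.

It remains to bound `G`. The global charge and energy estimates give
`|ε| ∫ |u||∇u| ≤ λ ∫ |f||u|` with `λ² = max 0 τ + |ε|`, so each term of `G` is of the form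
`∫ |f| w` with `‖w‖²_X ≤ C G`. The duality of `X` and `X*` yields `G ≤ C ‖f‖_{X*} √G`, and since
`G` is finite, `G ≤ C² ‖f‖²_{X*}`.
-/

open Filter Topology
open scoped RealInnerProductSpace

section LogCutoff

variable {E : Type*} [NormedAddCommGroup E]

/-- A fixed smooth profile on the line, equal to `1` on `[-1, 1]` and supported in `[-2, 2]`. -/
def cutoffProfile : ContDiffBump (0 : ℝ) := ⟨1, 2, one_pos, one_lt_two⟩

/-- The logarithmic cutoff: the profile evaluated at `log |x|² / (n + 1)`, which removes a
neighbourhood of the origin and a neighbourhood of infinity. The value at the origin is set to `0`,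
since `Real.log 0 = 0` would give `1` there. -/
def logCutoff (n : ℕ) : E → ℝ :=
  indicator {0}ᶜ fun x => cutoffProfile (Real.log (‖x‖ ^ 2) / (n + 1))

lemma logCutoff_of_ne_zero (n : ℕ) {x : E} (hx : x ≠ 0) :
    logCutoff n x = cutoffProfile (Real.log (‖x‖ ^ 2) / (n + 1)) :=
  indicator_of_mem (mem_compl_singleton_iff.2 hx) _

lemma logCutoff_nonneg (n : ℕ) (x : E) : 0 ≤ logCutoff n x :=
  indicator_nonneg (fun _ _ => cutoffProfile.nonneg) x

lemma logCutoff_le_one (n : ℕ) (x : E) : logCutoff n x ≤ 1 :=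
  indicator_le' (fun _ _ => cutoffProfile.le_one) (fun _ _ => zero_le_one) x

lemma measurable_logCutoff [MeasurableSpace E] [BorelSpace E] (n : ℕ) :
    Measurable (logCutoff n : E → ℝ) :=
  (cutoffProfile.continuous.measurable.comp (by fun_prop)).indicator
    (measurableSet_singleton 0).compl

lemma logCutoff_eq_zero {n : ℕ} {x : E} (hlog : (n + 1 : ℝ) ≤ |Real.log ‖x‖|) :
    logCutoff n x = 0 := by
  rcases eq_or_ne x 0 with rfl | hx
  · simp [logCutoff]
  rw [logCutoff_of_ne_zero n hx]
  refine cutoffProfile.zero_of_le_dist ?_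
  have hn : (0 : ℝ) < n + 1 := by positivity
  change (2 : ℝ) ≤ _
  rw [dist_zero_right, Real.norm_eq_abs, Real.log_pow, abs_div, abs_mul, abs_of_pos hn,
    le_div_iff₀ hn]
  simpa using hlog

lemma logCutoff_eventuallyEq_zero (n : ℕ) : logCutoff n =ᶠ[𝓝 (0 : E)] 0 := by
  filter_upwards [ball_mem_nhds (0 : E) (Real.exp_pos (-(n + 1)))] with x hx
  rcases eq_or_ne x 0 with rfl | hx0
  · simp [logCutoff]
  have hlog : Real.log ‖x‖ < -(n + 1) :=
    (Real.log_lt_iff_lt_exp (norm_pos_iff.2 hx0)).2 (by simpa using hx)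
  exact logCutoff_eq_zero (by linarith [neg_le_abs (Real.log ‖x‖)])

lemma hasCompactSupport_logCutoff [ProperSpace E] (n : ℕ) :
    HasCompactSupport (logCutoff n : E → ℝ) := by
  refine HasCompactSupport.intro (isCompact_closedBall 0 (Real.exp (n + 1))) fun x hx => ?_
  have hexp : Real.exp (n + 1) < ‖x‖ := by simpa using hx
  have hlog : n + 1 < Real.log ‖x‖ :=
    (Real.lt_log_iff_exp_lt ((Real.exp_pos _).trans hexp)).2 hexp
  exact logCutoff_eq_zero (hlog.le.trans (le_abs_self _))

lemma eventually_logCutoff_eq_one {x : E} (hx : x ≠ 0) : ∀ᶠ n in atTop, logCutoff n x = 1 := by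
  obtain ⟨N, hN⟩ := exists_nat_ge |Real.log (‖x‖ ^ 2)|
  filter_upwards [eventually_ge_atTop N] with n hn
  rw [logCutoff_of_ne_zero n hx]
  refine cutoffProfile.one_of_mem_closedBall ?_
  have hn0 : (0 : ℝ) < n + 1 := by positivity
  have hNn : (N : ℝ) ≤ n := Nat.cast_le.2 hn
  change _ ∈ closedBall (0 : ℝ) 1
  rw [mem_closedBall_zero_iff, Real.norm_eq_abs, abs_div, abs_of_pos hn0, div_le_one hn0]
  linarith

variable [InnerProductSpace ℝ E]

lemma hasFDerivAt_logCutoff (n : ℕ) {x : E} (hx : x ≠ 0) :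
    HasFDerivAt (logCutoff n)
      (deriv cutoffProfile (Real.log (‖x‖ ^ 2) / (n + 1)) •
        (2 / ((n + 1) * ‖x‖ ^ 2)) • innerSL ℝ x) x := by
  have hx2 : ‖x‖ ^ 2 ≠ 0 := by positivity
  have hprofile : HasDerivAt cutoffProfile (deriv cutoffProfile (Real.log (‖x‖ ^ 2) / (n + 1)))
      (Real.log (‖x‖ ^ 2) / (n + 1)) :=
    ((cutoffProfile.contDiff (n := 1)).differentiable one_ne_zero _).hasDerivAt
  have hlog := ((hasStrictFDerivAt_norm_sq x).hasFDerivAt.log hx2).mul_const ((n + 1 : ℝ)⁻¹)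
  refine ((hprofile.comp_hasFDerivAt x (hlog.congr_fderiv ?_)).congr_of_eventuallyEq ?_)
  · ext y
    simp only [smul_apply, innerSL_apply_apply, smul_eq_mul, nsmul_eq_mul, Nat.cast_ofNat]
    field_simp
  · filter_upwards [isOpen_compl_singleton.mem_nhds hx] with y hy
    exact logCutoff_of_ne_zero n hy

lemma contDiffAt_logCutoff (n : ℕ) {x : E} (hx : x ≠ 0) : ContDiffAt ℝ 1 (logCutoff n) x := by
  have hlog : ContDiffAt ℝ 1 (fun y : E => Real.log (‖y‖ ^ 2) / (n + 1)) x :=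
    ((contDiff_norm_sq ℝ).contDiffAt.log (by positivity)).div_const _
  refine (cutoffProfile.contDiff.contDiffAt.comp x hlog).congr_of_eventuallyEq ?_
  filter_upwards [isOpen_compl_singleton.mem_nhds hx] with y hy
  exact logCutoff_of_ne_zero n hy

lemma exists_norm_fderiv_logCutoff_le : ∃ K, 0 ≤ K ∧ ∀ (n : ℕ) {x : E}, x ≠ 0 →
    ‖fderiv ℝ (logCutoff n) x‖ ≤ K / (n + 1) / ‖x‖ := by
  obtain ⟨K, hK⟩ := ((cutoffProfile.contDiff (n := 1)).continuous_deriv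
    le_rfl).bounded_above_of_compact_support cutoffProfile.hasCompactSupport.deriv
  have hK0 : 0 ≤ K := (norm_nonneg _).trans (hK 0)
  refine ⟨2 * K, by positivity, fun n x hx => ?_⟩
  rw [(hasFDerivAt_logCutoff n hx).fderiv, norm_smul, norm_smul, innerSL_apply_norm,
    Real.norm_of_nonneg (by positivity : 0 ≤ 2 / ((n + 1) * ‖x‖ ^ 2))]
  calc _ ≤ K * (2 / ((n + 1) * ‖x‖ ^ 2) * ‖x‖) := by gcongr; exact hK _
    _ = 2 * K / (n + 1) / ‖x‖ := by field_simp

end LogCutoff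

section PartialDeriv

variable {d : ℕ} {F : Type*} [NormedAddCommGroup F] [NormedSpace ℝ F]

/-- The `i`-th partial derivative of a function with values in a normed space; for complex valued
functions this is `pd`. -/
def partialDeriv (u : Ed d → F) (i : Fin d) (x : Ed d) : F :=
  fderiv ℝ u x (EuclideanSpace.single i 1)

lemma contDiff_partialDeriv {u : Ed d → F} {m n : WithTop ℕ∞} (hu : ContDiff ℝ n u)
    (hmn : m + 1 ≤ n) (i : Fin d) : ContDiff ℝ m (partialDeriv u i) :=
  (hu.fderiv_right hmn).clm_apply contDiff_const

/-- The divergence of the vector field with components `P i`. -/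
def divergence (P : Fin d → Ed d → ℝ) (x : Ed d) : ℝ := ∑ i, partialDeriv (P i) i x

end PartialDeriv

section DivergenceTheorem

variable {d : ℕ} {H Q : Ed d → ℝ} {P : Fin d → Ed d → ℝ}

lemma ae_ne_zero (hd : 0 < d) : ∀ᵐ x : Ed d, x ≠ 0 := by
  have : Nontrivial (Ed d) := Module.nontrivial_of_finrank_pos (R := ℝ) (by simpa using hd)
  exact Measure.ae_ne volume 0

lemma integrable_partialDeriv {g : Ed d → ℝ} (hg : ContDiff ℝ 1 g) (hs : HasCompactSupport g)
    (i : Fin d) : Integrable (partialDeriv g i) := by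
  refine (contDiff_partialDeriv (m := 0) hg (by simp) i).continuous.integrable_of_hasCompactSupport
    ?_
  exact (hs.fderiv (𝕜 := ℝ)).comp_left
    (g := fun L : Ed d →L[ℝ] ℝ => L (EuclideanSpace.single i 1)) rfl

lemma integral_partialDeriv_eq_zero {g : Ed d → ℝ} (hg : ContDiff ℝ 1 g)
    (hs : HasCompactSupport g) (i : Fin d) : ∫ x, partialDeriv g i x = 0 := by
  have hparts := integral_mul_fderiv_eq_neg_fderiv_mul_of_integrable (𝕜 := ℝ)
    (μ := (volume : Measure (Ed d))) (f := fun _ => (1 : ℝ)) (g := g)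
    (v := EuclideanSpace.single i 1) (by simp)
    (by simp only [one_mul]; exact integrable_partialDeriv hg hs i)
    (by simpa only [one_mul] using hg.continuous.integrable_of_hasCompactSupport hs)
    (fun _ _ => by fun_prop) (fun _ _ => (hg.differentiable one_ne_zero).differentiableAt)
  simpa [partialDeriv] using hparts

lemma integrable_divergence (hP : ∀ i, ContDiff ℝ 1 (P i))
    (hs : ∀ i, HasCompactSupport (P i)) : Integrable (divergence P) :=
  integrable_finsetSum _ fun i _ => integrable_partialDeriv (hP i) (hs i) i

lemma integral_divergence_eq_zero (hP : ∀ i, ContDiff ℝ 1 (P i))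
    (hs : ∀ i, HasCompactSupport (P i)) : ∫ x, divergence P x = 0 := by
  unfold divergence
  rw [integral_finsetSum _ fun i _ => integrable_partialDeriv (hP i) (hs i) i]
  exact Finset.sum_eq_zero fun i _ => integral_partialDeriv_eq_zero (hP i) (hs i) i

lemma contDiff_logCutoff_mul {g : Ed d → ℝ} (hg : ContDiffOn ℝ 1 g {0}ᶜ) (n : ℕ) :
    ContDiff ℝ 1 fun x => logCutoff n x * g x := by
  rw [contDiff_iff_contDiffAt]
  intro x
  rcases eq_or_ne x 0 with rfl | hx
  · refine (contDiffAt_const (c := (0 : ℝ))).congr_of_eventuallyEq ?_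
    filter_upwards [logCutoff_eventuallyEq_zero n] with y hy
    rw [hy, Pi.zero_apply, zero_mul]
  · exact (contDiffAt_logCutoff n hx).mul (hg.contDiffAt (isOpen_compl_singleton.mem_nhds hx))

lemma divergence_logCutoff_mul (hP : ∀ i, ContDiffOn ℝ 1 (P i) {0}ᶜ) (n : ℕ) {x : Ed d}
    (hx : x ≠ 0) :
    divergence (fun i y => logCutoff n y * P i y) x =
      logCutoff n x * divergence P x + ∑ i, partialDeriv (logCutoff n) i x * P i x := by
  rw [divergence, divergence, Finset.mul_sum, ← Finset.sum_add_distrib]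
  refine Finset.sum_congr rfl fun i _ => ?_
  have hP' := ((hP i).contDiffAt (isOpen_compl_singleton.mem_nhds hx)).differentiableAt one_ne_zero
  have hcut := (contDiffAt_logCutoff n hx).differentiableAt one_ne_zero
  simp only [partialDeriv]
  rw [fderiv_fun_mul hcut hP']
  simp only [add_apply, smul_apply, smul_eq_mul]
  ring

lemma logCutoff_mul_le (hP : ∀ i, ContDiffOn ℝ 1 (P i) {0}ᶜ)
    (hle : ∀ x, x ≠ 0 → H x ≤ Q x + divergence P x) {K : ℝ} {n : ℕ} {x : Ed d} (hx : x ≠ 0)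
    (hK : ‖fderiv ℝ (logCutoff n) x‖ ≤ K / (n + 1) / ‖x‖) :
    logCutoff n x * H x ≤ logCutoff n x * Q x + divergence (fun i y => logCutoff n y * P i y) x
      + K / (n + 1) * ∑ i, |P i x / ‖x‖| := by
  have hcut : -∑ i, partialDeriv (logCutoff n) i x * P i x ≤
      K / (n + 1) * ∑ i, |P i x / ‖x‖| := by
    rw [Finset.mul_sum, ← Finset.sum_neg_distrib]
    refine Finset.sum_le_sum fun i _ => ?_
    have hpartial : |partialDeriv (logCutoff n) i x| ≤ K / (n + 1) / ‖x‖ :=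
      ((fderiv ℝ (logCutoff n) x).le_opNorm (EuclideanSpace.single i 1)).trans (by simpa using hK)
    calc -(partialDeriv (logCutoff n) i x * P i x)
        ≤ |partialDeriv (logCutoff n) i x| * |P i x| := by
          rw [← abs_mul]; exact neg_le_abs _
      _ ≤ K / (n + 1) / ‖x‖ * |P i x| := by gcongr
      _ = K / (n + 1) * |P i x / ‖x‖| := by rw [abs_div, abs_norm]; ring
  rw [divergence_logCutoff_mul hP n hx]
  linarith [mul_le_mul_of_nonneg_left (hle x hx) (logCutoff_nonneg n x)]

lemma integrable_logCutoff_mul (hQ : Integrable Q) (n : ℕ) :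
    Integrable fun x => logCutoff n x * Q x :=
  hQ.bdd_mul (c := 1) (measurable_logCutoff n).aestronglyMeasurable <| .of_forall fun x => by
    rw [Real.norm_of_nonneg (logCutoff_nonneg n x)]
    exact logCutoff_le_one n x

lemma lintegral_logCutoff_mul_le (hd : 0 < d) (hP : ∀ i, ContDiffOn ℝ 1 (P i) {0}ᶜ)
    (hPi : ∀ i, Integrable fun x => P i x / ‖x‖) (hQ : Integrable Q) (hH : ∀ x, 0 ≤ H x)
    (hle : ∀ x, x ≠ 0 → H x ≤ Q x + divergence P x) {K : ℝ} {n : ℕ}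
    (hK : ∀ {x : Ed d}, x ≠ 0 → ‖fderiv ℝ (logCutoff n) x‖ ≤ K / (n + 1) / ‖x‖) :
    ∫⁻ x, ENNReal.ofReal (logCutoff n x * H x) ≤
      ENNReal.ofReal ((∫ x, logCutoff n x * Q x) + K / (n + 1) * ∫ x, ∑ i, |P i x / ‖x‖|) := by
  have hC1 : ∀ i, ContDiff ℝ 1 fun x => logCutoff n x * P i x :=
    fun i => contDiff_logCutoff_mul (hP i) n
  have hsupp : ∀ i, HasCompactSupport fun x => logCutoff n x * P i x :=
    fun i => (hasCompactSupport_logCutoff n).mul_right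
  have hdiv := integrable_divergence hC1 hsupp
  have hcutQ := integrable_logCutoff_mul hQ n
  have hboundary : Integrable fun x => ∑ i, |P i x / ‖x‖| :=
    integrable_finsetSum _ fun i _ => (hPi i).abs
  have hpointwise := fun x (hx : x ≠ 0) => logCutoff_mul_le hP hle hx (hK hx)
  refine (lintegral_mono_ae ?_).trans_eq ((ofReal_integral_eq_lintegral_ofReal
    ((hcutQ.add hdiv).add (hboundary.const_mul (K / (n + 1)))) ?_).symm.trans ?_)
  · filter_upwards [ae_ne_zero hd] with x hx
    exact ENNReal.ofReal_le_ofReal (hpointwise x hx)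
  · filter_upwards [ae_ne_zero hd] with x hx
    exact (mul_nonneg (logCutoff_nonneg n x) (hH x)).trans (hpointwise x hx)
  · rw [integral_add' (hcutQ.add hdiv) (hboundary.const_mul _), integral_add' hcutQ hdiv,
      integral_divergence_eq_zero hC1 hsupp, add_zero, integral_const_mul]

lemma tendsto_integral_logCutoff_mul (hd : 0 < d) (hQ : Integrable Q) :
    Tendsto (fun n => ∫ x, logCutoff n x * Q x) atTop (𝓝 (∫ x, Q x)) := by
  refine tendsto_integral_of_dominated_convergence (fun x => ‖Q x‖)
    (fun n => (integrable_logCutoff_mul hQ n).aestronglyMeasurable) hQ.norm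
    (fun n => .of_forall fun x => ?_) ?_
  · rw [norm_mul, Real.norm_of_nonneg (logCutoff_nonneg n x)]
    exact mul_le_of_le_one_left (norm_nonneg _) (logCutoff_le_one n x)
  · filter_upwards [ae_ne_zero hd] with x hx
    refine tendsto_const_nhds.congr' ?_
    filter_upwards [eventually_logCutoff_eq_one hx] with n hn
    rw [hn, one_mul]

/-- The cutoff error is `O(1/n)` times `∫ |P| / |x|`, so the flux through small and large spheres
disappears. Integrability of `H` is part of the conclusion. -/
theorem lintegral_le_of_le_add_divergence (hd : 0 < d) (hP : ∀ i, ContDiffOn ℝ 1 (P i) {0}ᶜ)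
    (hPi : ∀ i, Integrable fun x => P i x / ‖x‖) (hQ : Integrable Q) (hHm : AEMeasurable H)
    (hH : ∀ x, 0 ≤ H x) (hle : ∀ x, x ≠ 0 → H x ≤ Q x + divergence P x) :
    ∫⁻ x, ENNReal.ofReal (H x) ≤ ENNReal.ofReal (∫ x, Q x) := by
  obtain ⟨K, -, hK⟩ := exists_norm_fderiv_logCutoff_le (E := Ed d)
  have herror : Tendsto (fun n : ℕ => K / ((n : ℝ) + 1)) atTop (𝓝 0) := by
    simpa [div_eq_mul_inv] using (tendsto_one_div_add_atTop_nhds_zero_nat (𝕜 := ℝ)).const_mul K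
  have hlimit : Tendsto (fun n : ℕ => ENNReal.ofReal
      ((∫ x, logCutoff n x * Q x) + K / (n + 1) * ∫ x, ∑ i, |P i x / ‖x‖|)) atTop
      (𝓝 (ENNReal.ofReal (∫ x, Q x))) := by
    refine ENNReal.tendsto_ofReal ?_
    simpa using (tendsto_integral_logCutoff_mul hd hQ).add (herror.mul_const _)
  calc ∫⁻ x, ENNReal.ofReal (H x)
      = ∫⁻ x, liminf (fun n => ENNReal.ofReal (logCutoff n x * H x)) atTop := by
        refine lintegral_congr_ae ?_
        filter_upwards [ae_ne_zero hd] with x hx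
        refine (Tendsto.liminf_eq (tendsto_const_nhds.congr' ?_)).symm
        filter_upwards [eventually_logCutoff_eq_one hx] with n hn
        rw [hn, one_mul]
    _ ≤ liminf (fun n => ∫⁻ x, ENNReal.ofReal (logCutoff n x * H x)) atTop :=
        lintegral_liminf_le' fun n =>
          ((measurable_logCutoff n).aemeasurable.mul hHm).ennreal_ofReal
    _ ≤ liminf (fun n : ℕ => ENNReal.ofReal
          ((∫ x, logCutoff n x * Q x) + K / (n + 1) * ∫ x, ∑ i, |P i x / ‖x‖|)) atTop :=
        liminf_le_liminf (.of_forall fun n => lintegral_logCutoff_mul_le hd hP hPi hQ hH hle (hK n))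
    _ = ENNReal.ofReal (∫ x, Q x) := hlimit.liminf_eq

end DivergenceTheorem

section SingularWeights

variable {d : ℕ}

lemma integrableOn_ball_div_norm_pow {k : ℕ} (hk : k < d) {h : Ed d → ℝ} (hc : Continuous h) :
    IntegrableOn (fun x => h x / ‖x‖ ^ k) (ball (0 : Ed d) 1) := by
  have hdim : Module.finrank ℝ (Ed d) = d := by simp
  obtain ⟨C, hC⟩ := (isCompact_closedBall (0 : Ed d) 1).exists_bound_of_continuousOn
    hc.continuousOn
  refine integrableOn_ball_of_norm_le_rpow (C := C) (α := k) (by rw [hdim]; omega)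
    (by rw [hdim]; exact_mod_cast hk) ?_ (hc.measurable.div (by fun_prop)).aestronglyMeasurable
  refine (ae_restrict_iff' measurableSet_ball).2 (.of_forall fun x hx => ?_)
  rw [Real.rpow_neg (norm_nonneg x), Real.rpow_natCast, norm_div, norm_pow, norm_norm,
    div_eq_mul_inv]
  gcongr
  exact hC x (ball_subset_closedBall hx)

lemma integrable_div_norm_pow {k : ℕ} (hk : k < d) {h : Ed d → ℝ} (hc : Continuous h)
    (hi : Integrable h) : Integrable fun x => h x / ‖x‖ ^ k := by
  have hfar : IntegrableOn (fun x => h x / ‖x‖ ^ k) (ball (0 : Ed d) 1)ᶜ := by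
    refine Integrable.mono' hi.norm.integrableOn
      (hc.measurable.div (by fun_prop)).aestronglyMeasurable ?_
    refine (ae_restrict_iff' measurableSet_ball.compl).2 (.of_forall fun x hx => ?_)
    have hx1 : 1 ≤ ‖x‖ := by simpa using hx
    rw [norm_div, norm_pow, norm_norm]
    exact div_le_self (norm_nonneg _) (one_le_pow₀ hx1)
  rw [← integrableOn_univ, ← union_compl_self (ball (0 : Ed d) 1)]
  exact (integrableOn_ball_div_norm_pow hk hc).union hfar

end SingularWeights

section Gradient

variable {d : ℕ} {F : Type*} [NormedAddCommGroup F] [NormedSpace ℝ F]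

/-- The Laplacian of a function with values in a normed space; for complex valued functions this
is `lap`. -/
def laplacian (u : Ed d → F) (x : Ed d) : F := ∑ i, partialDeriv (partialDeriv u i) i x

/-- The Euler derivative `x · ∇u`, that is, `|x|` times the radial derivative. -/
def eulerDeriv (u : Ed d → F) (x : Ed d) : F := fderiv ℝ u x x

/-- The Euclidean length `|∇u|` of the gradient. -/
def gradNorm (u : Ed d → F) (x : Ed d) : ℝ := √(∑ i, ‖partialDeriv u i x‖ ^ 2)

lemma gradNorm_nonneg (u : Ed d → F) (x : Ed d) : 0 ≤ gradNorm u x := Real.sqrt_nonneg _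

lemma gradNorm_sq (u : Ed d → F) (x : Ed d) :
    gradNorm u x ^ 2 = ∑ i, ‖partialDeriv u i x‖ ^ 2 :=
  Real.sq_sqrt (Finset.sum_nonneg fun _ _ => sq_nonneg _)

lemma continuous_gradNorm {u : Ed d → F} (hu : ContDiff ℝ 1 u) : Continuous (gradNorm u) :=
  Real.continuous_sqrt.comp <| continuous_finsetSum _ fun i _ =>
    (contDiff_partialDeriv (m := 0) hu (by simp) i).continuous.norm.pow 2

lemma norm_partialDeriv_le (u : Ed d → F) (i : Fin d) (x : Ed d) :
    ‖partialDeriv u i x‖ ≤ gradNorm u x :=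
  Real.le_sqrt_of_sq_le <|
    Finset.single_le_sum (f := fun i => ‖partialDeriv u i x‖ ^ 2) (fun _ _ => sq_nonneg _)
      (Finset.mem_univ i)

lemma eulerDeriv_eq_sum (u : Ed d → F) (x : Ed d) :
    eulerDeriv u x = ∑ i, x i • partialDeriv u i x := by
  have hx : x = ∑ i, x i • (EuclideanSpace.single i (1 : ℝ) : Ed d) := by
    ext j
    simp [Finset.sum_apply, Pi.single_apply]
  calc fderiv ℝ u x x = fderiv ℝ u x (∑ i, x i • EuclideanSpace.single i (1 : ℝ)) :=
        congrArg (fderiv ℝ u x) hx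
    _ = ∑ i, x i • partialDeriv u i x := by simp only [map_sum, map_smul, partialDeriv]

lemma norm_eulerDeriv_le (u : Ed d → F) (x : Ed d) :
    ‖eulerDeriv u x‖ ≤ ‖x‖ * gradNorm u x := by
  calc ‖eulerDeriv u x‖ ≤ ∑ i, |x i| * ‖partialDeriv u i x‖ := by
        rw [eulerDeriv_eq_sum]
        refine (norm_sum_le _ _).trans_eq (Finset.sum_congr rfl fun i _ => ?_)
        rw [norm_smul, Real.norm_eq_abs]
    _ ≤ √(∑ i, |x i| ^ 2) * √(∑ i, ‖partialDeriv u i x‖ ^ 2) :=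
        Real.sum_mul_le_sqrt_mul_sqrt _ _ _
    _ = ‖x‖ * gradNorm u x := by simp only [gradNorm, EuclideanSpace.norm_eq, Real.norm_eq_abs]

lemma contDiff_eulerDeriv {u : Ed d → F} (hu : ContDiff ℝ 2 u) : ContDiff ℝ 1 (eulerDeriv u) :=
  (hu.fderiv_right (m := 1) le_rfl).clm_apply contDiff_id

lemma eulerDeriv_eq_of_hasFDerivAt {b : Ed d → ℝ} {b' : ℝ} {x : Ed d}
    (hb : HasFDerivAt b (-b' • innerSL ℝ x) x) : eulerDeriv b x = -(b' * ‖x‖ ^ 2) := by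
  rw [eulerDeriv, hb.fderiv]
  simp only [smul_apply, innerSL_apply_apply, smul_eq_mul, real_inner_self_eq_norm_sq, neg_mul]

lemma partialDeriv_eulerDeriv {u : Ed d → F} (hu : ContDiff ℝ 2 u) (i : Fin d) (x : Ed d) :
    partialDeriv (eulerDeriv u) i x = partialDeriv u i x + eulerDeriv (partialDeriv u i) x := by
  have hu' : DifferentiableAt ℝ (fderiv ℝ u) x :=
    ((hu.fderiv_right (m := 1) le_rfl).differentiable one_ne_zero).differentiableAt
  have hsymm := (hu.contDiffAt (x := x)).isSymmSndFDerivAt (by simp)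
  have heuler : HasFDerivAt (eulerDeriv u) _ x := hu'.hasFDerivAt.clm_apply (hasFDerivAt_id x)
  have hpartial : HasFDerivAt (partialDeriv u i) _ x :=
    hu'.hasFDerivAt.clm_apply (hasFDerivAt_const (EuclideanSpace.single i (1 : ℝ)) x)
  simp only [partialDeriv, eulerDeriv] at heuler hpartial ⊢
  rw [heuler.fderiv, hpartial.fderiv]
  simp [hsymm.eq x (EuclideanSpace.single i 1)]

end Gradient

section Multipliers

variable {d : ℕ} {F : Type*} [NormedAddCommGroup F] [InnerProductSpace ℝ F]

/-- The pairing `∑ i, ⟪∂ᵢw, ∂ᵢu⟫` of two gradients. -/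
def gradInner (w u : Ed d → F) (x : Ed d) : ℝ :=
  ∑ i, ⟪partialDeriv w i x, partialDeriv u i x⟫

lemma gradInner_self (u : Ed d → F) (x : Ed d) : gradInner u u x = gradNorm u x ^ 2 := by
  simp only [gradInner, gradNorm_sq, real_inner_self_eq_norm_sq]

lemma gradInner_add_left {v w u : Ed d → F} {x : Ed d} (hv : DifferentiableAt ℝ v x)
    (hw : DifferentiableAt ℝ w x) :
    gradInner (fun y => v y + w y) u x = gradInner v u x + gradInner w u x := by
  simp only [gradInner, partialDeriv, fderiv_fun_add hv hw, add_apply, inner_add_left,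
    Finset.sum_add_distrib]

lemma gradInner_radial_smul_left {b : Ed d → ℝ} {b' : ℝ} {w u : Ed d → F} {x : Ed d}
    (hb : HasFDerivAt b (-b' • innerSL ℝ x) x) (hw : DifferentiableAt ℝ w x) :
    gradInner (fun y => b y • w y) u x =
      b x * gradInner w u x - b' * ⟪w x, eulerDeriv u x⟫ := by
  have hpartial : ∀ i, partialDeriv (fun y => b y • w y) i x =
      b x • partialDeriv w i x - (b' * x i) • w x := by
    intro i
    rw [partialDeriv, (hb.fun_smul hw.hasFDerivAt).fderiv]
    simp [partialDeriv, EuclideanSpace.inner_single_right, sub_eq_add_neg]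
  simp only [gradInner, hpartial, inner_sub_left, real_inner_smul_left, Finset.sum_sub_distrib,
    eulerDeriv_eq_sum, inner_sum, real_inner_smul_right, Finset.mul_sum, mul_assoc]

lemma eulerDeriv_norm_sq {u : Ed d → F} {x : Ed d} (hu : DifferentiableAt ℝ u x) :
    eulerDeriv (fun y => ‖u y‖ ^ 2) x = 2 * ⟪u x, eulerDeriv u x⟫ := by
  rw [eulerDeriv, hu.hasFDerivAt.norm_sq.fderiv]
  simp [eulerDeriv]

lemma differentiable_gradNorm_sq {u : Ed d → F} (hu : ContDiff ℝ 2 u) :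
    Differentiable ℝ fun y => gradNorm u y ^ 2 := by
  simp only [gradNorm_sq]
  exact Differentiable.fun_sum fun i _ =>
    ((contDiff_partialDeriv (m := 1) hu le_rfl i).differentiable one_ne_zero).norm_sq ℝ

lemma gradInner_eulerDeriv {u : Ed d → F} (hu : ContDiff ℝ 2 u) (x : Ed d) :
    gradInner (eulerDeriv u) u x =
      gradNorm u x ^ 2 + eulerDeriv (fun y => gradNorm u y ^ 2) x / 2 := by
  have hdiff : ∀ i, DifferentiableAt ℝ (partialDeriv u i) x := fun i =>
    ((contDiff_partialDeriv (m := 1) hu le_rfl i).differentiable one_ne_zero).differentiableAt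
  have heuler : eulerDeriv (fun y => gradNorm u y ^ 2) x =
      ∑ i, 2 * ⟪partialDeriv u i x, eulerDeriv (partialDeriv u i) x⟫ := by
    simp only [gradNorm_sq]
    rw [eulerDeriv, fderiv_fun_sum fun i _ => (hdiff i).norm_sq ℝ, sum_apply]
    exact Finset.sum_congr rfl fun i _ => eulerDeriv_norm_sq (hdiff i)
  rw [heuler]
  simp only [gradInner, partialDeriv_eulerDeriv hu, inner_add_left, gradNorm_sq,
    Finset.sum_add_distrib, real_inner_self_eq_norm_sq, Finset.sum_div]
  congr 1
  refine Finset.sum_congr rfl fun i _ => ?_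
  rw [real_inner_comm]
  ring

lemma divergence_add {P Q : Fin d → Ed d → ℝ} {x : Ed d}
    (hP : ∀ i, DifferentiableAt ℝ (P i) x) (hQ : ∀ i, DifferentiableAt ℝ (Q i) x) :
    divergence (fun i y => P i y + Q i y) x = divergence P x + divergence Q x := by
  simp only [divergence, partialDeriv, fderiv_fun_add (hP _) (hQ _), add_apply,
    Finset.sum_add_distrib]

lemma divergence_inner_partialDeriv {w u : Ed d → F} {x : Ed d} (hw : DifferentiableAt ℝ w x)
    (hu : ContDiff ℝ 2 u) :
    divergence (fun i y => ⟪w y, partialDeriv u i y⟫) x =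
      gradInner w u x + ⟪w x, laplacian u x⟫ := by
  have hpartial : ∀ i, partialDeriv (fun y => ⟪w y, partialDeriv u i y⟫) i x =
      ⟪partialDeriv w i x, partialDeriv u i x⟫ + ⟪w x, partialDeriv (partialDeriv u i) i x⟫ := by
    intro i
    have hui : DifferentiableAt ℝ (partialDeriv u i) x :=
      ((contDiff_partialDeriv (m := 1) hu le_rfl i).differentiable one_ne_zero).differentiableAt
    rw [partialDeriv, fderiv_inner_apply ℝ hw hui, add_comm]
    rfl
  simp only [divergence, hpartial, Finset.sum_add_distrib, gradInner, laplacian, inner_sum]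

lemma divergence_coord_mul {g : Ed d → ℝ} {x : Ed d} (hg : DifferentiableAt ℝ g x) :
    divergence (fun i y => y i * g y) x = d * g x + eulerDeriv g x := by
  have hpartial : ∀ i, partialDeriv (fun y => y i * g y) i x = g x + x i * partialDeriv g i x := by
    intro i
    have hcoord : HasFDerivAt (fun y : Ed d => y i)
        (EuclideanSpace.proj i : Ed d →L[ℝ] ℝ) x :=
      (EuclideanSpace.proj i : Ed d →L[ℝ] ℝ).hasFDerivAt
    rw [partialDeriv, (hcoord.fun_mul hg.hasFDerivAt).fderiv]
    simp [partialDeriv]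
    ring
  simp only [divergence, hpartial, Finset.sum_add_distrib, eulerDeriv_eq_sum, smul_eq_mul,
    Finset.sum_const, Finset.card_univ, Fintype.card_fin, nsmul_eq_mul]

/-- The multiplier `b u + a x · ∇u`. -/
def morawetzMultiplier (a b : Ed d → ℝ) (u : Ed d → F) (x : Ed d) : F :=
  b x • u x + a x • eulerDeriv u x

/-- The density of the radial part of the Morawetz flux, for the potential `Z`. -/
def morawetzDensity (a c Z : Ed d → ℝ) (u : Ed d → F) (x : Ed d) : ℝ :=
  2⁻¹ * (c x * ‖u x‖ ^ 2 - a x * gradNorm u x ^ 2 - Z x * a x * ‖u x‖ ^ 2)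

/-- The `i`-th component of the Morawetz flux, for radial weights `a`, `b`, `c` with `∇b = -c x`
and the potential `Z`. -/
def morawetzFlux (a b c Z : Ed d → ℝ) (u : Ed d → F) (i : Fin d) (x : Ed d) : ℝ :=
  ⟪morawetzMultiplier a b u x, partialDeriv u i x⟫ + x i * morawetzDensity a c Z u x

section

variable {a b c Z : Ed d → ℝ} {a' c' : ℝ} {u : Ed d → F} {x : Ed d}

lemma gradInner_morawetzMultiplier (ha : HasFDerivAt a (-a' • innerSL ℝ x) x)
    (hb : HasFDerivAt b (-c x • innerSL ℝ x) x) (hu : ContDiff ℝ 2 u) :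
    gradInner (morawetzMultiplier a b u) u x =
      b x * gradNorm u x ^ 2 - c x * ⟪u x, eulerDeriv u x⟫
        + a x * (gradNorm u x ^ 2 + eulerDeriv (fun y => gradNorm u y ^ 2) x / 2)
        - a' * ‖eulerDeriv u x‖ ^ 2 := by
  have hu' : DifferentiableAt ℝ u x := hu.differentiable two_ne_zero x
  have heuler : DifferentiableAt ℝ (eulerDeriv u) x :=
    (contDiff_eulerDeriv hu).differentiable one_ne_zero x
  unfold morawetzMultiplier
  rw [gradInner_add_left (hb.differentiableAt.fun_smul hu')
      (ha.differentiableAt.fun_smul heuler),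
    gradInner_radial_smul_left hb hu', gradInner_radial_smul_left ha heuler, gradInner_self,
    gradInner_eulerDeriv hu, real_inner_self_eq_norm_sq]
  ring

lemma eulerDeriv_mul {g h : Ed d → ℝ} (hg : DifferentiableAt ℝ g x)
    (hh : DifferentiableAt ℝ h x) :
    eulerDeriv (fun y => g y * h y) x = g x * eulerDeriv h x + h x * eulerDeriv g x := by
  rw [eulerDeriv, fderiv_fun_mul hg hh]
  simp [eulerDeriv]

lemma differentiableAt_morawetzDensity (ha : DifferentiableAt ℝ a x)
    (hc : DifferentiableAt ℝ c x) (hZ : DifferentiableAt ℝ Z x) (hu : ContDiff ℝ 2 u) :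
    DifferentiableAt ℝ (morawetzDensity a c Z u) x := by
  have hu2 := (hu.differentiable two_ne_zero x).norm_sq ℝ
  exact (((hc.fun_mul hu2).fun_sub (ha.fun_mul (differentiable_gradNorm_sq hu x))).fun_sub
    ((hZ.fun_mul ha).fun_mul hu2)).const_mul 2⁻¹

lemma eulerDeriv_morawetzDensity (ha : HasFDerivAt a (-a' • innerSL ℝ x) x)
    (hc : HasFDerivAt c (-c' • innerSL ℝ x) x) (hZ : DifferentiableAt ℝ Z x)
    (hu : ContDiff ℝ 2 u) :
    eulerDeriv (morawetzDensity a c Z u) x =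
      (c x - Z x * a x) * ⟪u x, eulerDeriv u x⟫
        + (Z x * a' - c') * ‖x‖ ^ 2 * ‖u x‖ ^ 2 / 2 - a x * eulerDeriv Z x * ‖u x‖ ^ 2 / 2
        + a' * ‖x‖ ^ 2 * gradNorm u x ^ 2 / 2
        - a x * eulerDeriv (fun y => gradNorm u y ^ 2) x / 2 := by
  have hu' : DifferentiableAt ℝ u x := hu.differentiable two_ne_zero x
  have hu2 := hu'.norm_sq ℝ
  have hgrad := differentiable_gradNorm_sq hu x
  have hZa := hZ.fun_mul ha.differentiableAt
  have hsplit : eulerDeriv (morawetzDensity a c Z u) x =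
      2⁻¹ * (eulerDeriv (fun y => c y * ‖u y‖ ^ 2) x
        - eulerDeriv (fun y => a y * gradNorm u y ^ 2) x
        - eulerDeriv (fun y => Z y * a y * ‖u y‖ ^ 2) x) := by
    unfold eulerDeriv morawetzDensity
    have hcu := hc.differentiableAt.fun_mul hu2
    have hagrad := ha.differentiableAt.fun_mul hgrad
    rw [fderiv_const_mul ((hcu.fun_sub hagrad).fun_sub (hZa.fun_mul hu2)),
      fderiv_fun_sub (hcu.fun_sub hagrad) (hZa.fun_mul hu2), fderiv_fun_sub hcu hagrad]
    rfl
  rw [hsplit, eulerDeriv_mul hc.differentiableAt hu2, eulerDeriv_mul ha.differentiableAt hgrad,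
    eulerDeriv_mul hZa hu2, eulerDeriv_mul hZ ha.differentiableAt, eulerDeriv_norm_sq hu',
    eulerDeriv_eq_of_hasFDerivAt ha, eulerDeriv_eq_of_hasFDerivAt hc]
  ring

/-- The relation between `a` and `b` says that `b` is half the divergence of `a x`, which makes the
multiplier antisymmetric and cancels all terms of the form `⟪u, x · ∇u⟫`. -/
theorem divergence_morawetzFlux (ha : HasFDerivAt a (-a' • innerSL ℝ x) x)
    (hb : HasFDerivAt b (-c x • innerSL ℝ x) x) (hc : HasFDerivAt c (-c' • innerSL ℝ x) x)
    (hab : 2 * b x = d * a x - a' * ‖x‖ ^ 2) (hZ : DifferentiableAt ℝ Z x)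
    (hu : ContDiff ℝ 2 u) :
    divergence (morawetzFlux a b c Z u) x =
      ⟪morawetzMultiplier a b u x, laplacian u x - Z x • u x⟫
        + a x * gradNorm u x ^ 2 - a' * ‖eulerDeriv u x‖ ^ 2
        + (d * c x - c' * ‖x‖ ^ 2) / 2 * ‖u x‖ ^ 2 - a x * eulerDeriv Z x / 2 * ‖u x‖ ^ 2 := by
  have hu' : DifferentiableAt ℝ u x := hu.differentiable two_ne_zero x
  have hmult : DifferentiableAt ℝ (morawetzMultiplier a b u) x :=
    (hb.differentiableAt.smul hu').add
      (ha.differentiableAt.smul ((contDiff_eulerDeriv hu).differentiable one_ne_zero x))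
  have hdensity := differentiableAt_morawetzDensity ha.differentiableAt hc.differentiableAt hZ hu
  have hpartial : ∀ i, DifferentiableAt ℝ (partialDeriv u i) x := fun i =>
    (contDiff_partialDeriv (m := 1) hu le_rfl i).differentiable one_ne_zero x
  have hcoord : ∀ i, DifferentiableAt ℝ (fun y : Ed d => y i) x := fun i => by fun_prop
  have hZu : ⟪morawetzMultiplier a b u x, Z x • u x⟫ =
      Z x * b x * ‖u x‖ ^ 2 + Z x * a x * ⟪u x, eulerDeriv u x⟫ := by
    rw [morawetzMultiplier, real_inner_smul_right, inner_add_left, real_inner_smul_left,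
      real_inner_smul_left, real_inner_self_eq_norm_sq, real_inner_comm (u x)]
    ring
  calc divergence (morawetzFlux a b c Z u) x
      = divergence (fun i y => ⟪morawetzMultiplier a b u y, partialDeriv u i y⟫) x
        + divergence (fun i y => y i * morawetzDensity a c Z u y) x :=
        divergence_add (fun i => hmult.inner ℝ (hpartial i)) fun i => (hcoord i).mul hdensity
    _ = _ := by
      rw [divergence_inner_partialDeriv hmult hu, divergence_coord_mul hdensity,
        gradInner_morawetzMultiplier ha hb hu, eulerDeriv_morawetzDensity ha hc hZ hu,
        inner_sub_right, hZu, morawetzDensity]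
      linear_combination (gradNorm u x ^ 2 / 2 + Z x * ‖u x‖ ^ 2 / 2) * hab

end

end Multipliers

section RegularizedWeights

variable {E : Type*} [NormedAddCommGroup E] {δ : ℝ} {x : E}

/-- The regularised inverse distance `(δ² + |x|²)^(-1/2)` to the origin. -/
def regInvNorm (δ : ℝ) (x : E) : ℝ := (√(δ ^ 2 + ‖x‖ ^ 2))⁻¹

/-- The weight `δ² (δ² + |x|²)^(-3/2)`, comparable with `1/δ` on the ball of radius `δ`. -/
def ballWeight (δ : ℝ) (x : E) : ℝ := δ ^ 2 * regInvNorm δ x ^ 3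

lemma regInvNorm_pos (hδ : 0 < δ) (x : E) : 0 < regInvNorm δ x :=
  inv_pos.2 (Real.sqrt_pos.2 (by positivity))

lemma regInvNorm_sq_mul (hδ : 0 < δ) (x : E) : regInvNorm δ x ^ 2 * (δ ^ 2 + ‖x‖ ^ 2) = 1 := by
  have hpos : 0 < δ ^ 2 + ‖x‖ ^ 2 := by positivity
  rw [regInvNorm, inv_pow, Real.sq_sqrt hpos.le, inv_mul_cancel₀ hpos.ne']

lemma regInvNorm_mul_norm_le_one (hδ : 0 < δ) (x : E) : regInvNorm δ x * ‖x‖ ≤ 1 := by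
  have ha := regInvNorm_pos hδ x
  refine (sq_le_one_iff₀ (by positivity)).1 ?_
  nlinarith [regInvNorm_sq_mul hδ x, sq_nonneg (regInvNorm δ x * δ)]

lemma regInvNorm_mul_le_one (hδ : 0 < δ) (x : E) : regInvNorm δ x * δ ≤ 1 := by
  have ha := regInvNorm_pos hδ x
  refine (sq_le_one_iff₀ (by positivity)).1 ?_
  nlinarith [regInvNorm_sq_mul hδ x, sq_nonneg (regInvNorm δ x * ‖x‖)]

lemma regInvNorm_le_inv_norm (hδ : 0 < δ) (hx : x ≠ 0) : regInvNorm δ x ≤ ‖x‖⁻¹ := by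
  rw [inv_eq_one_div, le_div_iff₀ (norm_pos_iff.2 hx)]
  exact regInvNorm_mul_norm_le_one hδ x

lemma regInvNorm_le_inv (hδ : 0 < δ) (x : E) : regInvNorm δ x ≤ δ⁻¹ := by
  rw [inv_eq_one_div, le_div_iff₀ hδ]
  exact regInvNorm_mul_le_one hδ x

lemma regInvNorm_cube_le_div_norm_sq (hδ : 0 < δ) (hx : x ≠ 0) :
    regInvNorm δ x ^ 3 ≤ regInvNorm δ x / ‖x‖ ^ 2 := by
  have ha := regInvNorm_pos hδ x
  calc regInvNorm δ x ^ 3 = regInvNorm δ x * regInvNorm δ x ^ 2 := by ring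
    _ ≤ regInvNorm δ x * ‖x‖⁻¹ ^ 2 := by gcongr; exact regInvNorm_le_inv_norm hδ hx
    _ = regInvNorm δ x / ‖x‖ ^ 2 := by rw [inv_pow, div_eq_mul_inv]

lemma regInvNorm_div_norm_sq_le (hδ : 0 < δ) (hx : x ≠ 0) :
    regInvNorm δ x / ‖x‖ ^ 2 ≤ 1 / ‖x‖ ^ 3 := by
  calc regInvNorm δ x / ‖x‖ ^ 2 ≤ ‖x‖⁻¹ / ‖x‖ ^ 2 := by
        gcongr; exact regInvNorm_le_inv_norm hδ hx
    _ = 1 / ‖x‖ ^ 3 := by field_simp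

lemma tendsto_regInvNorm (hx : x ≠ 0) :
    Tendsto (fun n : ℕ => regInvNorm (1 / ((n : ℝ) + 1)) x) atTop (𝓝 ‖x‖⁻¹) := by
  have hx0 : 0 < ‖x‖ := norm_pos_iff.2 hx
  have hsum : Tendsto (fun n : ℕ => (1 / ((n : ℝ) + 1)) ^ 2 + ‖x‖ ^ 2) atTop (𝓝 (‖x‖ ^ 2)) := by
    simpa using ((tendsto_one_div_add_atTop_nhds_zero_nat (𝕜 := ℝ)).pow 2).add_const (‖x‖ ^ 2)
  have hsqrt := ((Real.continuous_sqrt.tendsto _).comp hsum).inv₀ (by positivity)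
  rwa [Real.sqrt_sq hx0.le] at hsqrt

lemma ballWeight_nonneg (hδ : 0 < δ) (x : E) : 0 ≤ ballWeight δ x :=
  mul_nonneg (sq_nonneg δ) (pow_nonneg (regInvNorm_pos hδ x).le 3)

lemma ballWeight_le_regInvNorm (hδ : 0 < δ) (x : E) : ballWeight δ x ≤ regInvNorm δ x := by
  have ha := regInvNorm_pos hδ x
  calc ballWeight δ x = regInvNorm δ x * (regInvNorm δ x * δ) ^ 2 := by rw [ballWeight]; ring
    _ ≤ regInvNorm δ x :=
        mul_le_of_le_one_right ha.le (pow_le_one₀ (by positivity) (regInvNorm_mul_le_one hδ x))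

lemma ballWeight_eq_sub (hδ : 0 < δ) (x : E) :
    ballWeight δ x = regInvNorm δ x - regInvNorm δ x ^ 3 * ‖x‖ ^ 2 := by
  rw [ballWeight]
  linear_combination regInvNorm δ x * regInvNorm_sq_mul hδ x

lemma inv_le_three_mul_ballWeight {R : ℝ} (hR : 0 < R) (hx : x ∈ ball (0 : E) R) :
    R⁻¹ ≤ 3 * ballWeight R x := by
  have hnorm : ‖x‖ ^ 2 ≤ R ^ 2 := by
    have : ‖x‖ < R := by simpa using hx
    gcongr
  have ha := regInvNorm_pos hR x
  set t := regInvNorm R x * R with ht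
  have ht0 : 0 < t := by positivity
  have ht2 : 1 / 2 ≤ t ^ 2 := by
    have := mul_le_mul_of_nonneg_left hnorm (sq_nonneg (regInvNorm R x))
    linarith [regInvNorm_sq_mul hR x, mul_pow (regInvNorm R x) R 2]
  have ht1 : 7 / 10 ≤ t := by nlinarith
  rw [inv_eq_one_div, div_le_iff₀ hR]
  calc (1 : ℝ) ≤ 3 * t ^ 3 := by nlinarith
    _ = 3 * ballWeight R x * R := by rw [ht, ballWeight]; ring

variable [InnerProductSpace ℝ E]

lemma contDiff_regInvNorm (hδ : 0 < δ) {n : WithTop ℕ∞} :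
    ContDiff ℝ n (regInvNorm δ : E → ℝ) := by
  have hpos : ∀ x : E, 0 < δ ^ 2 + ‖x‖ ^ 2 := fun x => by positivity
  exact (ContDiff.sqrt (contDiff_const.add (contDiff_norm_sq ℝ)) fun x => (hpos x).ne').inv
    fun x => (Real.sqrt_pos.2 (hpos x)).ne'

lemma contDiff_ballWeight (hδ : 0 < δ) {n : WithTop ℕ∞} : ContDiff ℝ n (ballWeight δ : E → ℝ) :=
  contDiff_const.mul ((contDiff_regInvNorm hδ).pow 3)

lemma hasFDerivAt_regInvNorm (hδ : 0 < δ) (x : E) :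
    HasFDerivAt (regInvNorm δ) (-(regInvNorm δ x ^ 3) • innerSL ℝ x) x := by
  have hpos : 0 < δ ^ 2 + ‖x‖ ^ 2 := by positivity
  have hroot : 0 < √(δ ^ 2 + ‖x‖ ^ 2) := Real.sqrt_pos.2 hpos
  have hsqrt := ((hasStrictFDerivAt_norm_sq x).hasFDerivAt.const_add (δ ^ 2)).sqrt hpos.ne'
  refine ((hasDerivAt_inv hroot.ne').comp_hasFDerivAt x hsqrt).congr_fderiv ?_
  ext y
  simp only [smul_apply, innerSL_apply_apply, smul_eq_mul, nsmul_eq_mul, Nat.cast_ofNat,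
    regInvNorm]
  field_simp

lemma hasFDerivAt_regInvNorm_pow (hδ : 0 < δ) (k : ℕ) (x : E) :
    HasFDerivAt (fun y => regInvNorm δ y ^ (k + 1))
      (-((k + 1) * regInvNorm δ x ^ (k + 3)) • innerSL ℝ x) x := by
  refine ((hasFDerivAt_regInvNorm hδ x).pow (k + 1)).congr_fderiv ?_
  ext y
  simp only [smul_apply, innerSL_apply_apply, smul_eq_mul, nsmul_eq_mul, Nat.cast_add,
    Nat.cast_one, Nat.add_sub_cancel]
  ring

lemma hasFDerivAt_ballWeight (hδ : 0 < δ) (x : E) :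
    HasFDerivAt (ballWeight δ) (-(3 * δ ^ 2 * regInvNorm δ x ^ 5) • innerSL ℝ x) x := by
  refine ((hasFDerivAt_regInvNorm_pow hδ 2 x).const_mul (δ ^ 2)).congr_fderiv ?_
  ext y
  simp only [smul_apply, innerSL_apply_apply, smul_eq_mul, Nat.cast_ofNat]
  ring

end RegularizedWeights

section MorawetzWeights

variable {d : ℕ} {δ : ℝ}

/-- The zeroth order coefficient of the Morawetz multiplier, `½ Δ √(δ² + |x|²)`. -/
def morawetzCoeff (δ : ℝ) (x : Ed d) : ℝ :=
  ((d - 1) * regInvNorm δ x + ballWeight δ x) / 2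

/-- The function `c` with `∇(morawetzCoeff δ) = -c x`. -/
def morawetzCoeffSlope (δ : ℝ) (x : Ed d) : ℝ :=
  ((d - 1) * regInvNorm δ x ^ 3 + 3 * δ ^ 2 * regInvNorm δ x ^ 5) / 2

lemma two_mul_morawetzCoeff (hδ : 0 < δ) (x : Ed d) :
    2 * morawetzCoeff δ x = d * regInvNorm δ x - regInvNorm δ x ^ 3 * ‖x‖ ^ 2 := by
  rw [morawetzCoeff, ballWeight_eq_sub hδ]
  ring

lemma contDiff_morawetzCoeff (hδ : 0 < δ) {n : WithTop ℕ∞} :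
    ContDiff ℝ n (morawetzCoeff δ : Ed d → ℝ) :=
  ((contDiff_const.mul (contDiff_regInvNorm hδ)).add (contDiff_ballWeight hδ)).div_const 2

lemma contDiff_morawetzCoeffSlope (hδ : 0 < δ) {n : WithTop ℕ∞} :
    ContDiff ℝ n (morawetzCoeffSlope δ : Ed d → ℝ) :=
  ((contDiff_const.mul ((contDiff_regInvNorm hδ).pow 3)).add
    (contDiff_const.mul ((contDiff_regInvNorm hδ).pow 5))).div_const 2

lemma hasFDerivAt_morawetzCoeff (hδ : 0 < δ) (x : Ed d) :
    HasFDerivAt (morawetzCoeff δ) (-morawetzCoeffSlope δ x • innerSL ℝ x) x := by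
  refine ((((hasFDerivAt_regInvNorm hδ x).const_mul ((d : ℝ) - 1)).add
    (hasFDerivAt_ballWeight hδ x)).mul_const 2⁻¹).congr_fderiv ?_
  ext y
  simp only [smul_apply, add_apply, innerSL_apply_apply, smul_eq_mul, morawetzCoeffSlope]
  ring

lemma hasFDerivAt_morawetzCoeffSlope (hδ : 0 < δ) (x : Ed d) :
    HasFDerivAt (morawetzCoeffSlope δ)
      (-((3 * (d - 1) * regInvNorm δ x ^ 5 + 15 * δ ^ 2 * regInvNorm δ x ^ 7) / 2) •
        innerSL ℝ x) x := by
  refine ((((hasFDerivAt_regInvNorm_pow hδ 2 x).const_mul ((d : ℝ) - 1)).add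
    ((hasFDerivAt_regInvNorm_pow hδ 4 x).const_mul (3 * δ ^ 2))).mul_const 2⁻¹).congr_fderiv ?_
  ext y
  simp only [smul_apply, add_apply, innerSL_apply_apply, smul_eq_mul, Nat.cast_ofNat]
  ring

lemma morawetzCoeff_nonneg (hd : 0 < d) (hδ : 0 < δ) (x : Ed d) : 0 ≤ morawetzCoeff δ x := by
  have hd1 : (0 : ℝ) ≤ d - 1 := sub_nonneg.2 (Nat.one_le_cast.2 hd)
  have ha := regInvNorm_pos hδ x
  have he := ballWeight_nonneg hδ x
  rw [morawetzCoeff]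
  positivity

lemma morawetzCoeff_le (hδ : 0 < δ) (x : Ed d) :
    morawetzCoeff δ x ≤ d / 2 * regInvNorm δ x := by
  rw [morawetzCoeff]
  linarith [ballWeight_le_regInvNorm hδ x]

lemma morawetzCoeffSlope_nonneg (hd : 0 < d) (hδ : 0 < δ) (x : Ed d) :
    0 ≤ morawetzCoeffSlope δ x := by
  have hd1 : (0 : ℝ) ≤ d - 1 := sub_nonneg.2 (Nat.one_le_cast.2 hd)
  have ha := regInvNorm_pos hδ x
  rw [morawetzCoeffSlope]
  positivity

lemma morawetzCoeffSlope_le (hδ : 0 < δ) (x : Ed d) :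
    morawetzCoeffSlope δ x ≤ (d + 2) / 2 * δ⁻¹ ^ 3 := by
  have ha := regInvNorm_pos hδ x
  have hfifth : δ ^ 2 * regInvNorm δ x ^ 5 ≤ regInvNorm δ x ^ 3 :=
    calc δ ^ 2 * regInvNorm δ x ^ 5 = ballWeight δ x * regInvNorm δ x ^ 2 := by
          rw [ballWeight]; ring
      _ ≤ regInvNorm δ x * regInvNorm δ x ^ 2 := by gcongr; exact ballWeight_le_regInvNorm hδ x
      _ = regInvNorm δ x ^ 3 := by ring
  calc morawetzCoeffSlope δ x ≤ (d + 2) / 2 * regInvNorm δ x ^ 3 := by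
        rw [morawetzCoeffSlope]; linarith
    _ ≤ (d + 2) / 2 * δ⁻¹ ^ 3 := by gcongr; exact regInvNorm_le_inv hδ x

/-- The constant `(d - 1)(d - 3) / 4` in front of `∫ |u|² / |x|³` in the Morawetz estimate. -/
def hardyConst (d : ℕ) : ℝ := ((d : ℝ) - 1) * ((d : ℝ) - 3) / 4

lemma hardyConst_pos (hd : 3 < d) : 0 < hardyConst d := by
  have hd3 : (3 : ℝ) < d := by exact_mod_cast hd
  have h1 : (0 : ℝ) < d - 1 := by linarith
  rw [hardyConst]
  positivity

/-- The coefficient of `|u|²` is `-¼ Δ² √(δ² + |x|²)`, which dominates its unregularised form. -/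
lemma hardyConst_mul_le (hd : 3 ≤ d) (hδ : 0 < δ) (x : Ed d) :
    hardyConst d * regInvNorm δ x ^ 3 ≤
      (d * morawetzCoeffSlope δ x - (3 * (d - 1) * regInvNorm δ x ^ 5
        + 15 * δ ^ 2 * regInvNorm δ x ^ 7) / 2 * ‖x‖ ^ 2) / 2 := by
  have hd3 : (0 : ℝ) ≤ d - 3 := sub_nonneg.2 (by exact_mod_cast hd)
  have ha := regInvNorm_pos hδ x
  have hextra : 0 ≤ (6 * (d - 3) * δ ^ 2 * regInvNorm δ x ^ 5
      + 15 * δ ^ 4 * regInvNorm δ x ^ 7) / 4 := by positivity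
  have hexpand : (d * morawetzCoeffSlope δ x - (3 * (d - 1) * regInvNorm δ x ^ 5
        + 15 * δ ^ 2 * regInvNorm δ x ^ 7) / 2 * ‖x‖ ^ 2) / 2 =
      hardyConst d * regInvNorm δ x ^ 3 + (6 * (d - 3) * δ ^ 2 * regInvNorm δ x ^ 5
        + 15 * δ ^ 4 * regInvNorm δ x ^ 7) / 4 := by
    rw [morawetzCoeffSlope, hardyConst]
    linear_combination (-(3 * (d - 1) * regInvNorm δ x ^ 3 + 15 * δ ^ 2 * regInvNorm δ x ^ 5) / 4)
      * regInvNorm_sq_mul hδ x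
  linarith

end MorawetzWeights

section Integrals

variable {α : Type*} [MeasurableSpace α] {μ : Measure α} {F : α → ℝ} {A : ℝ}

lemma integrable_of_lintegral_le (hm : Measurable F) (h0 : ∀ x, 0 ≤ F x)
    (h : ∫⁻ x, ENNReal.ofReal (F x) ∂μ ≤ ENNReal.ofReal A) : Integrable F μ := by
  refine ⟨hm.aestronglyMeasurable, ?_⟩
  rw [hasFiniteIntegral_iff_ofReal (.of_forall h0)]
  exact h.trans_lt ENNReal.ofReal_lt_top

lemma integral_le_of_lintegral_le (hA : 0 ≤ A) (hF : Integrable F μ) (h0 : ∀ x, 0 ≤ F x)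
    (h : ∫⁻ x, ENNReal.ofReal (F x) ∂μ ≤ ENNReal.ofReal A) : ∫ x, F x ∂μ ≤ A := by
  rwa [← ofReal_integral_eq_lintegral_ofReal hF (.of_forall h0),
    ENNReal.ofReal_le_ofReal_iff hA] at h

end Integrals

section Equation

variable {d : ℕ}

lemma continuous_laplacian {F : Type*} [NormedAddCommGroup F] [NormedSpace ℝ F] {u : Ed d → F}
    (hu : ContDiff ℝ 2 u) : Continuous (laplacian u) :=
  continuous_finsetSum _ fun i _ => (contDiff_partialDeriv (m := 0)
    (contDiff_partialDeriv hu (m := 1) (by norm_num) i) (by norm_num) i).continuous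

lemma measurable_source_of_equation {ε τ : ℝ} {V : Ed d → ℝ} {u f : Ed d → ℂ} (hV : Measurable V)
    (hu : ContDiff ℝ 2 u)
    (heq : ∀ x, -laplacian u x + V x * u x + ε * Complex.I * u x - τ * u x = f x) :
    Measurable f := by
  have hum := hu.continuous.measurable
  have hlap := (continuous_laplacian hu).measurable
  rw [show f = _ from funext fun x => (heq x).symm]
  fun_prop

/-- `u` is a square integrable classical solution, with square integrable gradient and source, of
the resolvent equation `-Δu + Vu + iεu - τu = f`. The sign `±` of the equation is part of `ε`. -/
structure ResolventSolution (ε τ : ℝ) (V : Ed d → ℝ) (u f : Ed d → ℂ) : Prop where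
  potential_nonneg : ∀ x, 0 ≤ V x
  potential_contDiffOn : ContDiffOn ℝ 1 V {0}ᶜ
  contDiff : ContDiff ℝ 2 u
  equation : ∀ x, -laplacian u x + V x * u x + ε * Complex.I * u x - τ * u x = f x
  integrable_sq : Integrable fun x => ‖u x‖ ^ 2
  integrable_gradNorm_sq : Integrable fun x => gradNorm u x ^ 2
  integrable_source_sq : Integrable fun x => ‖f x‖ ^ 2

/-- The repulsivity condition on the potential; `eulerDeriv V x` is `|x| ∂_r V(x)`. -/
def IsRepulsive (γ η : ℝ) (V : Ed d → ℝ) : Prop :=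
  ∀ x, x ≠ 0 →
    γ * V x + eulerDeriv V x ≤ (1 - η) * ((d : ℝ) - 1) * ((d : ℝ) - 3) / (2 * ‖x‖ ^ 2)

namespace ResolventSolution

variable {ε τ : ℝ} {V : Ed d → ℝ} {u f : Ed d → ℂ}

lemma contDiff_one (h : ResolventSolution ε τ V u f) : ContDiff ℝ 1 u :=
  h.contDiff.of_le (by norm_num)

lemma measurable (h : ResolventSolution ε τ V u f) : Measurable u :=
  h.contDiff.continuous.measurable

lemma measurable_gradNorm (h : ResolventSolution ε τ V u f) : Measurable (gradNorm u) :=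
  (continuous_gradNorm h.contDiff_one).measurable

lemma measurable_potential (h : ResolventSolution ε τ V u f) : Measurable V :=
  measurable_of_continuousOn_compl_singleton 0 h.potential_contDiffOn.continuousOn

lemma measurable_source (h : ResolventSolution ε τ V u f) : Measurable f :=
  measurable_source_of_equation h.measurable_potential h.contDiff h.equation

lemma laplacian_eq (h : ResolventSolution ε τ V u f) (x : Ed d) :
    laplacian u x = ((V x - τ : ℝ) + ε * Complex.I) * u x - f x := by
  rw [← h.equation x]
  push_cast
  ring

lemma memLp_norm (h : ResolventSolution ε τ V u f) : MemLp (fun x => ‖u x‖) 2 volume :=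
  (memLp_two_iff_integrable_sq h.measurable.norm.aestronglyMeasurable).2 h.integrable_sq

lemma memLp_gradNorm (h : ResolventSolution ε τ V u f) : MemLp (gradNorm u) 2 volume :=
  (memLp_two_iff_integrable_sq h.measurable_gradNorm.aestronglyMeasurable).2
    h.integrable_gradNorm_sq

lemma memLp_norm_source (h : ResolventSolution ε τ V u f) : MemLp (fun x => ‖f x‖) 2 volume :=
  (memLp_two_iff_integrable_sq h.measurable_source.norm.aestronglyMeasurable).2
    h.integrable_source_sq

lemma integrable_sq_div_norm_pow (h : ResolventSolution ε τ V u f) {k : ℕ} (hk : k < d) :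
    Integrable fun x => ‖u x‖ ^ 2 / ‖x‖ ^ k :=
  integrable_div_norm_pow hk (h.contDiff.continuous.norm.pow 2) h.integrable_sq

lemma memLp_norm_div_norm (h : ResolventSolution ε τ V u f) (hd : 2 < d) :
    MemLp (fun x => ‖u x‖ / ‖x‖) 2 volume :=
  (memLp_two_iff_integrable_sq (h.measurable.norm.div measurable_norm).aestronglyMeasurable).2
    (by simpa only [Pi.div_apply, div_pow] using h.integrable_sq_div_norm_pow hd)

lemma integrable_source_mul (h : ResolventSolution ε τ V u f) :
    Integrable fun x => ‖f x‖ * ‖u x‖ :=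
  h.memLp_norm_source.integrable_mul h.memLp_norm

lemma integrable_source_mul_gradNorm (h : ResolventSolution ε τ V u f) :
    Integrable fun x => ‖f x‖ * gradNorm u x :=
  h.memLp_norm_source.integrable_mul h.memLp_gradNorm

lemma integrable_norm_mul_gradNorm (h : ResolventSolution ε τ V u f) :
    Integrable fun x => ‖u x‖ * gradNorm u x :=
  h.memLp_norm.integrable_mul h.memLp_gradNorm

lemma integrable_source_mul_div_norm (h : ResolventSolution ε τ V u f) (hd : 2 < d) :
    Integrable fun x => ‖f x‖ * ‖u x‖ / ‖x‖ := by
  simpa only [mul_div_assoc] using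
    (h.memLp_norm_source.integrable_mul (h.memLp_norm_div_norm hd) :
      Integrable fun x => ‖f x‖ * (‖u x‖ / ‖x‖))

lemma integrable_norm_mul_gradNorm_div_norm (h : ResolventSolution ε τ V u f) (hd : 2 < d) :
    Integrable fun x => ‖u x‖ * gradNorm u x / ‖x‖ := by
  simpa only [div_mul_eq_mul_div] using
    ((h.memLp_norm_div_norm hd).integrable_mul h.memLp_gradNorm :
      Integrable fun x => ‖u x‖ / ‖x‖ * gradNorm u x)

end ResolventSolution

end Equation

section RadialMultipliers

variable {d : ℕ}

lemma inner_mul_self_right (ω ζ z : ℂ) :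
    ⟪ω * z, ζ * z⟫ = (ω.re * ζ.re + ω.im * ζ.im) * ‖z‖ ^ 2 := by
  rw [Complex.inner, Complex.sq_norm, Complex.normSq_apply]
  simp
  ring

lemma gradInner_const_mul_left {u : Ed d → ℂ} {x : Ed d} (hu : DifferentiableAt ℝ u x) (ω : ℂ) :
    gradInner (fun y => ω * u y) u x = ω.re * gradNorm u x ^ 2 := by
  have hω (i : Fin d) : ⟪ω * partialDeriv u i x, partialDeriv u i x⟫
      = ω.re * ‖partialDeriv u i x‖ ^ 2 := by
    simpa using inner_mul_self_right ω 1 (partialDeriv u i x)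
  rw [gradNorm_sq, Finset.mul_sum]
  refine Finset.sum_congr rfl fun i _ => ?_
  rw [← hω i]
  simp only [partialDeriv, fderiv_const_mul hu, smul_apply, smul_eq_mul]

lemma exists_phase_im_mul_eq_abs (ε : ℝ) : ∃ ω : ℂ, ‖ω‖ ≤ 1 ∧ ω.re = 0 ∧ ω.im * ε = |ε| := by
  rcases le_total 0 ε with hε | hε
  · exact ⟨Complex.I, by simp, by simp, by simp [abs_of_nonneg hε]⟩
  · exact ⟨-Complex.I, by simp, by simp, by simp [abs_of_nonpos hε]⟩

namespace ResolventSolution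

variable {ε τ B : ℝ} {V b b' H Q : Ed d → ℝ} {u f : Ed d → ℂ} {ω : ℂ}

lemma inner_laplacian (h : ResolventSolution ε τ V u f) (ω : ℂ) (x : Ed d) :
    ⟪ω * u x, laplacian u x⟫
      = (ω.re * (V x - τ) + ω.im * ε) * ‖u x‖ ^ 2 - ⟪ω * u x, f x⟫ := by
  rw [h.laplacian_eq, inner_sub_right, inner_mul_self_right]
  simp

lemma divergence_radial_multiplier (h : ResolventSolution ε τ V u f) (ω : ℂ) {b' : ℝ} {x : Ed d}
    (hb : HasFDerivAt b (-b' • innerSL ℝ x) x) :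
    divergence (fun i y => ⟪b y • (ω * u y), partialDeriv u i y⟫) x
      = b x * (ω.re * (gradNorm u x ^ 2 + (V x - τ) * ‖u x‖ ^ 2) + ω.im * ε * ‖u x‖ ^ 2)
        - b x * ⟪ω * u x, f x⟫ - b' * ⟪ω * u x, eulerDeriv u x⟫ := by
  have hu : DifferentiableAt ℝ u x := h.contDiff_one.differentiable one_ne_zero x
  have hωu : DifferentiableAt ℝ (fun y => ω * u y) x := hu.const_mul ω
  rw [divergence_inner_partialDeriv (w := fun y => b y • (ω * u y))
    (hb.differentiableAt.smul hωu) h.contDiff, gradInner_radial_smul_left hb hωu,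
    gradInner_const_mul_left hu, real_inner_smul_left, h.inner_laplacian]
  ring

/-- Testing the equation with `b ω ū`, for a radial weight `b` and a phase `ω`: `ω = 1` and
`ω = -1` produce the energy, `ω = ± i` the charge. -/
theorem lintegral_le_of_radial_multiplier (h : ResolventSolution ε τ V u f) (hd : 2 < d)
    (hω : ‖ω‖ ≤ 1) (hbc : ContDiff ℝ 1 b) (hb : ∀ x, HasFDerivAt b (-b' x • innerSL ℝ x) x)
    (hb0 : ∀ x, 0 ≤ b x) (hbB : ∀ x, b x ≤ B) (hb'0 : ∀ x, 0 ≤ b' x) (hQ : Integrable Q)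
    (hHm : AEMeasurable H) (hH : ∀ x, 0 ≤ H x)
    (hle : ∀ x, x ≠ 0 →
      H x + b x * (‖f x‖ * ‖u x‖) + b' x * (‖u x‖ * (‖x‖ * gradNorm u x)) ≤ Q x
        + b x * (ω.re * (gradNorm u x ^ 2 + (V x - τ) * ‖u x‖ ^ 2) + ω.im * ε * ‖u x‖ ^ 2)) :
    ∫⁻ x, ENNReal.ofReal (H x) ≤ ENNReal.ofReal (∫ x, Q x) := by
  have hωu (x : Ed d) : ‖ω * u x‖ ≤ ‖u x‖ := by
    rw [norm_mul]
    exact mul_le_of_le_one_left (norm_nonneg _) hω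
  have hflux (i : Fin d) :
      ContDiff ℝ 1 fun y => ⟪b y • (ω * u y), partialDeriv u i y⟫ :=
    (hbc.smul (contDiff_const.mul h.contDiff_one)).inner ℝ
      (contDiff_partialDeriv h.contDiff (by norm_num) i)
  refine lintegral_le_of_le_add_divergence (by omega) (fun i => (hflux i).contDiffOn)
    (fun i => ?_) hQ hHm hH fun x hx => ?_
  · refine ((h.integrable_norm_mul_gradNorm_div_norm hd).const_mul B).mono'
      ((hflux i).continuous.measurable.div measurable_norm).aestronglyMeasurable
      (.of_forall fun x => ?_)
    rw [norm_div, norm_norm, ← mul_div_assoc, ← mul_assoc]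
    gcongr
    refine (norm_inner_le_norm _ _).trans ?_
    rw [norm_smul, Real.norm_of_nonneg (hb0 x)]
    exact mul_le_mul (mul_le_mul (hbB x) (hωu x) (norm_nonneg _) ((hb0 x).trans (hbB x)))
      (norm_partialDeriv_le u i x) (norm_nonneg _)
      (mul_nonneg ((hb0 x).trans (hbB x)) (norm_nonneg _))
  · have hsource : ⟪ω * u x, f x⟫ ≤ ‖f x‖ * ‖u x‖ :=
      (real_inner_le_norm _ _).trans (by rw [mul_comm]; gcongr; exact hωu x)
    have hradial : ⟪ω * u x, eulerDeriv u x⟫ ≤ ‖u x‖ * (‖x‖ * gradNorm u x) :=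
      (real_inner_le_norm _ _).trans (mul_le_mul (hωu x) (norm_eulerDeriv_le u x)
        (norm_nonneg _) (norm_nonneg _))
    rw [h.divergence_radial_multiplier ω (hb x)]
    linarith [hle x hx, mul_le_mul_of_nonneg_left hsource (hb0 x),
      mul_le_mul_of_nonneg_left hradial (hb'0 x)]

theorem lintegral_le_of_phase (h : ResolventSolution ε τ V u f) (hd : 2 < d) (hω : ‖ω‖ ≤ 1)
    (hQ : Integrable Q) (hHm : AEMeasurable H) (hH : ∀ x, 0 ≤ H x)
    (hle : ∀ x, H x + ‖f x‖ * ‖u x‖ ≤ Q x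
      + (ω.re * (gradNorm u x ^ 2 + (V x - τ) * ‖u x‖ ^ 2) + ω.im * ε * ‖u x‖ ^ 2)) :
    ∫⁻ x, ENNReal.ofReal (H x) ≤ ENNReal.ofReal (∫ x, Q x) :=
  h.lintegral_le_of_radial_multiplier (b := fun _ => 1) (b' := fun _ => 0) (B := 1) hd hω
    contDiff_const (fun x => by simpa using hasFDerivAt_const (1 : ℝ) x) (fun _ => zero_le_one)
    (fun _ => le_rfl) (fun _ => le_rfl) hQ hHm hH fun x _ => by simpa using hle x

lemma lintegral_energy_le (h : ResolventSolution ε τ V u f) (hd : 2 < d) :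
    ∫⁻ x, ENNReal.ofReal (V x * ‖u x‖ ^ 2 + gradNorm u x ^ 2)
      ≤ ENNReal.ofReal (∫ x, (‖f x‖ * ‖u x‖ + max 0 τ * ‖u x‖ ^ 2)) := by
  have := h.measurable
  have := h.measurable_gradNorm
  have := h.measurable_potential
  refine h.lintegral_le_of_phase (ω := 1) hd (by simp)
    (h.integrable_source_mul.add (h.integrable_sq.const_mul _)) (by fun_prop)
    (fun x => add_nonneg (mul_nonneg (h.potential_nonneg x) (sq_nonneg _)) (sq_nonneg _))
    fun x => ?_
  have hτ := mul_le_mul_of_nonneg_right (le_max_right 0 τ) (sq_nonneg ‖u x‖)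
  simp only [Complex.one_re, Complex.one_im]
  linarith

lemma integrable_potential_mul_sq (h : ResolventSolution ε τ V u f) (hd : 2 < d) :
    Integrable fun x => V x * ‖u x‖ ^ 2 := by
  refine integrable_of_lintegral_le (h.measurable_potential.mul (h.measurable.norm.pow_const 2))
    (fun x => mul_nonneg (h.potential_nonneg x) (sq_nonneg _))
    ((lintegral_mono fun x => ENNReal.ofReal_le_ofReal ?_).trans (h.lintegral_energy_le hd))
  exact le_add_of_nonneg_right (sq_nonneg _)

lemma integral_gradNorm_sq_le (h : ResolventSolution ε τ V u f) (hd : 2 < d) :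
    ∫ x, gradNorm u x ^ 2 ≤ (∫ x, ‖f x‖ * ‖u x‖) + max 0 τ * ∫ x, ‖u x‖ ^ 2 := by
  rw [← integral_const_mul, ← integral_add h.integrable_source_mul (h.integrable_sq.const_mul _)]
  refine integral_le_of_lintegral_le (integral_nonneg fun x => by positivity)
    h.integrable_gradNorm_sq (fun x => sq_nonneg _)
    ((lintegral_mono fun x => ENNReal.ofReal_le_ofReal ?_).trans (h.lintegral_energy_le hd))
  exact le_add_of_nonneg_left (mul_nonneg (h.potential_nonneg x) (sq_nonneg _))

lemma abs_mul_integral_sq_le (h : ResolventSolution ε τ V u f) (hd : 2 < d) :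
    |ε| * ∫ x, ‖u x‖ ^ 2 ≤ ∫ x, ‖f x‖ * ‖u x‖ := by
  have := h.measurable
  rw [← integral_const_mul]
  refine integral_le_of_lintegral_le (integral_nonneg fun x => by positivity)
    (h.integrable_sq.const_mul _) (fun x => by positivity) ?_
  obtain ⟨ω, hω, hre, him⟩ := exists_phase_im_mul_eq_abs ε
  refine h.lintegral_le_of_phase hd hω h.integrable_source_mul (by fun_prop)
    (fun x => by positivity) fun x => ?_
  rw [hre, him]
  linarith

end ResolventSolution

end RadialMultipliers

section FluxBounds

variable {d : ℕ} {F : Type*} [NormedAddCommGroup F] [InnerProductSpace ℝ F]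
  {a b c Z : Ed d → ℝ} {u : Ed d → F}

lemma contDiffOn_morawetzFlux {s : Set (Ed d)} (ha : ContDiff ℝ 1 a) (hb : ContDiff ℝ 1 b)
    (hc : ContDiff ℝ 1 c) (hZ : ContDiffOn ℝ 1 Z s) (hu : ContDiff ℝ 2 u) (i : Fin d) :
    ContDiffOn ℝ 1 (morawetzFlux a b c Z u i) s := by
  have hu1 : ContDiff ℝ 1 u := hu.of_le (by norm_num)
  have hpartial (j : Fin d) : ContDiff ℝ 1 (partialDeriv u j) :=
    contDiff_partialDeriv hu (by norm_num) j
  have hgrad : ContDiff ℝ 1 fun y => gradNorm u y ^ 2 := by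
    simp only [gradNorm_sq]
    exact ContDiff.sum fun j _ => (hpartial j).norm_sq ℝ
  have hu2 : ContDiff ℝ 1 fun y => ‖u y‖ ^ 2 := hu1.norm_sq ℝ
  have hcoord : ContDiff ℝ 1 fun y : Ed d => y i := by fun_prop
  have hmult : ContDiff ℝ 1 (morawetzMultiplier a b u) :=
    (hb.smul hu1).add (ha.smul (contDiff_eulerDeriv hu))
  have hdensity : ContDiffOn ℝ 1 (morawetzDensity a c Z u) s :=
    contDiffOn_const.mul ((((hc.mul hu2).sub (ha.mul hgrad)).contDiffOn).sub
      ((hZ.mul ha.contDiffOn).mul hu2.contDiffOn))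
  exact (hmult.inner ℝ (hpartial i)).contDiffOn.add (hcoord.contDiffOn.mul hdensity)

lemma abs_morawetzDensity_le (x : Ed d) :
    |morawetzDensity a c Z u x| ≤
      |c x| * ‖u x‖ ^ 2 + |a x| * gradNorm u x ^ 2 + |Z x| * |a x| * ‖u x‖ ^ 2 := by
  have htri : |c x * ‖u x‖ ^ 2 - a x * gradNorm u x ^ 2 - Z x * a x * ‖u x‖ ^ 2| ≤
      |c x| * ‖u x‖ ^ 2 + |a x| * gradNorm u x ^ 2 + |Z x| * |a x| * ‖u x‖ ^ 2 := by
    refine (abs_sub _ _).trans (add_le_add ((abs_sub _ _).trans_eq ?_) (le_of_eq ?_)) <;>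
      simp only [abs_mul, abs_pow, abs_norm, sq_abs]
  rw [morawetzDensity, abs_mul, abs_of_pos (by norm_num : (0 : ℝ) < 2⁻¹)]
  linarith [abs_nonneg (c x * ‖u x‖ ^ 2 - a x * gradNorm u x ^ 2 - Z x * a x * ‖u x‖ ^ 2)]

lemma abs_morawetzFlux_le (i : Fin d) (x : Ed d) :
    |morawetzFlux a b c Z u i x| ≤ |b x| * (‖u x‖ * gradNorm u x)
      + ‖x‖ * (|c x| * ‖u x‖ ^ 2 + 2 * |a x| * gradNorm u x ^ 2
        + |Z x| * |a x| * ‖u x‖ ^ 2) := by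
  have hcoord : |x i| ≤ ‖x‖ := by simpa using PiLp.norm_apply_le x i
  have hmult : ‖morawetzMultiplier a b u x‖ ≤ |b x| * ‖u x‖ + |a x| * (‖x‖ * gradNorm u x) := by
    refine (norm_add_le _ _).trans (add_le_add (norm_smul _ _).le ?_)
    rw [norm_smul, Real.norm_eq_abs]
    exact mul_le_mul_of_nonneg_left (norm_eulerDeriv_le u x) (abs_nonneg _)
  calc |morawetzFlux a b c Z u i x|
      ≤ ‖morawetzMultiplier a b u x‖ * ‖partialDeriv u i x‖
        + |x i| * |morawetzDensity a c Z u x| := by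
        rw [morawetzFlux, ← abs_mul (x i)]
        exact (abs_add_le _ _).trans (add_le_add_left (abs_real_inner_le_norm _ _) _)
    _ ≤ (|b x| * ‖u x‖ + |a x| * (‖x‖ * gradNorm u x)) * gradNorm u x
        + ‖x‖ * (|c x| * ‖u x‖ ^ 2 + |a x| * gradNorm u x ^ 2
          + |Z x| * |a x| * ‖u x‖ ^ 2) :=
        add_le_add
          (mul_le_mul hmult (norm_partialDeriv_le u i x) (norm_nonneg _)
            ((norm_nonneg _).trans hmult))
          (mul_le_mul hcoord (abs_morawetzDensity_le x) (abs_nonneg _) (norm_nonneg _))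
    _ = _ := by ring

end FluxBounds

section MorawetzInequality

variable {d : ℕ}

lemma IsRepulsive.eulerDeriv_le {γ η : ℝ} {V : Ed d → ℝ} (hV : IsRepulsive γ η V) {x : Ed d}
    (hx : x ≠ 0) :
    eulerDeriv V x / 2 ≤ (1 - η) * hardyConst d / ‖x‖ ^ 2 - γ / 2 * V x := by
  have hbound : (1 - η) * ((d : ℝ) - 1) * ((d : ℝ) - 3) / (2 * ‖x‖ ^ 2)
      = 2 * ((1 - η) * hardyConst d / ‖x‖ ^ 2) := by
    rw [hardyConst]
    field_simp
    ring
  linarith [hV x hx]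

lemma ballWeight_mul_gradNorm_sq_le {F : Type*} [NormedAddCommGroup F] [NormedSpace ℝ F] {δ : ℝ}
    (hδ : 0 < δ) (u : Ed d → F) (x : Ed d) :
    ballWeight δ x * gradNorm u x ^ 2 ≤
      regInvNorm δ x * gradNorm u x ^ 2 - regInvNorm δ x ^ 3 * ‖eulerDeriv u x‖ ^ 2 := by
  have ha := regInvNorm_pos hδ x
  have hradial : ‖eulerDeriv u x‖ ^ 2 ≤ ‖x‖ ^ 2 * gradNorm u x ^ 2 := by
    rw [← mul_pow]
    gcongr
    exact norm_eulerDeriv_le u x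
  calc ballWeight δ x * gradNorm u x ^ 2
      = regInvNorm δ x * gradNorm u x ^ 2
        - regInvNorm δ x ^ 3 * (‖x‖ ^ 2 * gradNorm u x ^ 2) := by
        rw [ballWeight_eq_sub hδ]; ring
    _ ≤ _ := by gcongr

lemma abs_regInvNorm_mul_inner_eulerDeriv_le {F : Type*} [NormedAddCommGroup F]
    [InnerProductSpace ℝ F] {δ : ℝ} (hδ : 0 < δ) (u : Ed d → F) (x : Ed d) (z : F) :
    |regInvNorm δ x * ⟪eulerDeriv u x, z⟫| ≤ ‖z‖ * gradNorm u x := by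
  have ha := regInvNorm_pos hδ x
  have hg := gradNorm_nonneg u x
  calc |regInvNorm δ x * ⟪eulerDeriv u x, z⟫|
      = regInvNorm δ x * |⟪eulerDeriv u x, z⟫| := by rw [abs_mul, abs_of_pos ha]
    _ ≤ regInvNorm δ x * (‖x‖ * gradNorm u x * ‖z‖) := by
        gcongr
        refine (abs_real_inner_le_norm _ _).trans ?_
        gcongr
        exact norm_eulerDeriv_le u x
    _ = regInvNorm δ x * ‖x‖ * (‖z‖ * gradNorm u x) := by ring
    _ ≤ ‖z‖ * gradNorm u x :=
        mul_le_of_le_one_left (by positivity) (regInvNorm_mul_norm_le_one hδ x)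

/-- The right-hand side of the Morawetz inequality. -/
def morawetzSource (ε : ℝ) (u f : Ed d → ℂ) : ℝ :=
  (∫ x, ‖f x‖ * gradNorm u x) + d / 2 * (∫ x, ‖f x‖ * ‖u x‖ / ‖x‖)
    + |ε| * ∫ x, ‖u x‖ * gradNorm u x

/-- The integrand on the left of the Morawetz inequality. -/
def morawetzIntegrand (γ η δ : ℝ) (V : Ed d → ℝ) (u : Ed d → ℂ) (x : Ed d) : ℝ :=
  ballWeight δ x * gradNorm u x ^ 2 + γ / 2 * (V x * ‖u x‖ ^ 2) * regInvNorm δ x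
    + η * hardyConst d * ‖u x‖ ^ 2 * (regInvNorm δ x / ‖x‖ ^ 2)

/-- The price of replacing `(δ² + |x|²)^{-3/2}` by `(δ² + |x|²)^{-1/2} |x|⁻²` in the Hardy term;
it disappears as `δ → 0`. -/
def hardyGap (δ : ℝ) (u : Ed d → ℂ) (x : Ed d) : ℝ :=
  (regInvNorm δ x / ‖x‖ ^ 2 - regInvNorm δ x ^ 3) * ‖u x‖ ^ 2

lemma hardyGap_nonneg {δ : ℝ} (hδ : 0 < δ) (u : Ed d → ℂ) {x : Ed d} (hx : x ≠ 0) :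
    0 ≤ hardyGap δ u x :=
  mul_nonneg (sub_nonneg.2 (regInvNorm_cube_le_div_norm_sq hδ hx)) (sq_nonneg _)

lemma hardyGap_le {δ : ℝ} (hδ : 0 < δ) (u : Ed d → ℂ) {x : Ed d} (hx : x ≠ 0) :
    hardyGap δ u x ≤ ‖u x‖ ^ 2 / ‖x‖ ^ 3 := by
  have ha := regInvNorm_pos hδ x
  calc hardyGap δ u x ≤ 1 / ‖x‖ ^ 3 * ‖u x‖ ^ 2 := by
        rw [hardyGap]
        gcongr
        exact (sub_le_self _ (by positivity)).trans (regInvNorm_div_norm_sq_le hδ hx)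
    _ = ‖u x‖ ^ 2 / ‖x‖ ^ 3 := by ring

namespace ResolventSolution

variable {γ η ε τ δ : ℝ} {V : Ed d → ℝ} {u f : Ed d → ℂ}

lemma integrable_hardyGap (h : ResolventSolution ε τ V u f) (hd : 3 < d) (hδ : 0 < δ) :
    Integrable (hardyGap δ u) := by
  have ha := (contDiff_regInvNorm (E := Ed d) hδ (n := 0)).continuous.measurable
  have hu := h.measurable
  refine (h.integrable_sq_div_norm_pow hd).mono'
    (by unfold hardyGap; fun_prop) ?_
  filter_upwards [ae_ne_zero (by omega : 0 < d)] with x hx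
  rw [Real.norm_of_nonneg (hardyGap_nonneg hδ u hx)]
  exact hardyGap_le hδ u hx

lemma neg_inner_multiplier_eq (h : ResolventSolution ε τ V u f) (a b : Ed d → ℝ) (x : Ed d) :
    -⟪morawetzMultiplier a b u x, laplacian u x - (V x - τ) • u x⟫ =
      b x * ⟪u x, f x⟫ + a x * ⟪eulerDeriv u x, f x⟫
        - ε * (a x * ⟪eulerDeriv u x, Complex.I * u x⟫) := by
  have hphase : ⟪u x, Complex.I * u x⟫ = 0 := by
    simpa using inner_mul_self_right 1 Complex.I (u x)
  have hequation : laplacian u x - (V x - τ) • u x = ε • (Complex.I * u x) - f x := by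
    rw [h.laplacian_eq]
    simp only [Complex.real_smul]
    ring
  simp only [hequation, morawetzMultiplier, inner_add_left, inner_sub_right,
    real_inner_smul_left, real_inner_smul_right, hphase]
  ring

lemma neg_inner_multiplier_le (h : ResolventSolution ε τ V u f) (hd : 0 < d) (hδ : 0 < δ)
    {x : Ed d} (hx : x ≠ 0) :
    -⟪morawetzMultiplier (regInvNorm δ) (morawetzCoeff δ) u x,
        laplacian u x - (V x - τ) • u x⟫ ≤
      ‖f x‖ * gradNorm u x + d / 2 * (‖f x‖ * ‖u x‖ / ‖x‖) + |ε| * (‖u x‖ * gradNorm u x) := by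
  have hcoeff : morawetzCoeff δ x ≤ d / 2 * ‖x‖⁻¹ :=
    (morawetzCoeff_le hδ x).trans (by gcongr; exact regInvNorm_le_inv_norm hδ hx)
  have hzeroOrder : morawetzCoeff δ x * ⟪u x, f x⟫ ≤ d / 2 * (‖f x‖ * ‖u x‖ / ‖x‖) :=
    calc morawetzCoeff δ x * ⟪u x, f x⟫
        ≤ morawetzCoeff δ x * (‖u x‖ * ‖f x‖) :=
          mul_le_mul_of_nonneg_left (real_inner_le_norm _ _) (morawetzCoeff_nonneg hd hδ x)
      _ ≤ d / 2 * ‖x‖⁻¹ * (‖u x‖ * ‖f x‖) := by gcongr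
      _ = d / 2 * (‖f x‖ * ‖u x‖ / ‖x‖) := by ring
  have hradial : regInvNorm δ x * ⟪eulerDeriv u x, f x⟫ ≤ ‖f x‖ * gradNorm u x :=
    (le_abs_self _).trans (abs_regInvNorm_mul_inner_eulerDeriv_le hδ u x _)
  have habsorption : -(ε * (regInvNorm δ x * ⟪eulerDeriv u x, Complex.I * u x⟫)) ≤
      |ε| * (‖u x‖ * gradNorm u x) := by
    refine (neg_le_abs _).trans ?_
    rw [abs_mul]
    gcongr
    simpa using abs_regInvNorm_mul_inner_eulerDeriv_le hδ u x (Complex.I * u x)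
  rw [h.neg_inner_multiplier_eq]
  linarith

lemma integrable_morawetzFlux_div_norm (h : ResolventSolution ε τ V u f) (hd : 2 < d)
    (hδ : 0 < δ) (i : Fin d) :
    Integrable fun x => morawetzFlux (regInvNorm δ) (morawetzCoeff δ) (morawetzCoeffSlope δ)
      (fun y => V y - τ) u i x / ‖x‖ := by
  have hmeas := measurable_of_continuousOn_compl_singleton 0 (contDiffOn_morawetzFlux
    (contDiff_regInvNorm hδ) (contDiff_morawetzCoeff hδ) (contDiff_morawetzCoeffSlope hδ)
    (h.potential_contDiffOn.sub (contDiffOn_const (c := τ))) h.contDiff i).continuousOn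
  refine Integrable.mono' (((((h.integrable_norm_mul_gradNorm_div_norm hd).const_mul
      (d / 2 * δ⁻¹)).add (h.integrable_sq.const_mul ((d + 2) / 2 * δ⁻¹ ^ 3))).add
      (h.integrable_gradNorm_sq.const_mul (2 * δ⁻¹))).add
      (((h.integrable_potential_mul_sq hd).add (h.integrable_sq.const_mul |τ|)).const_mul δ⁻¹))
    (hmeas.div measurable_norm).aestronglyMeasurable ?_
  filter_upwards [ae_ne_zero (by omega : 0 < d)] with x hx
  have hr : 0 < ‖x‖ := norm_pos_iff.2 hx
  have ha := regInvNorm_pos hδ x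
  have haδ := regInvNorm_le_inv hδ x
  have hg := gradNorm_nonneg u x
  have hb : |morawetzCoeff δ x| ≤ d / 2 * δ⁻¹ := by
    rw [abs_of_nonneg (morawetzCoeff_nonneg (by omega) hδ x)]
    exact (morawetzCoeff_le hδ x).trans (by gcongr)
  have hc : |morawetzCoeffSlope δ x| ≤ (d + 2) / 2 * δ⁻¹ ^ 3 := by
    rw [abs_of_nonneg (morawetzCoeffSlope_nonneg (by omega) hδ x)]
    exact morawetzCoeffSlope_le hδ x
  have hZ : |V x - τ| ≤ V x + |τ| :=
    (abs_sub _ _).trans_eq (by rw [abs_of_nonneg (h.potential_nonneg x)])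
  have hZ0 : 0 ≤ V x + |τ| := (abs_nonneg _).trans hZ
  rw [norm_div, norm_norm, Real.norm_eq_abs, div_le_iff₀ hr]
  refine (abs_morawetzFlux_le i x).trans ?_
  rw [abs_of_pos ha]
  calc _ ≤ d / 2 * δ⁻¹ * (‖u x‖ * gradNorm u x) + ‖x‖ * ((d + 2) / 2 * δ⁻¹ ^ 3 * ‖u x‖ ^ 2
        + 2 * δ⁻¹ * gradNorm u x ^ 2 + (V x + |τ|) * δ⁻¹ * ‖u x‖ ^ 2) := by gcongr
    _ = _ := by
      simp only [Pi.add_apply]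
      field_simp
      ring

lemma morawetzIntegrand_le_add_divergence (h : ResolventSolution ε τ V u f)
    (hV : IsRepulsive γ η V) (hd : 3 ≤ d) (hδ : 0 < δ) {x : Ed d} (hx : x ≠ 0) :
    morawetzIntegrand γ η δ V u x ≤
      ‖f x‖ * gradNorm u x + d / 2 * (‖f x‖ * ‖u x‖ / ‖x‖) + |ε| * (‖u x‖ * gradNorm u x)
        + hardyConst d * hardyGap δ u x
        + divergence (morawetzFlux (regInvNorm δ) (morawetzCoeff δ) (morawetzCoeffSlope δ)
          (fun y => V y - τ) u) x := by
  have hVx : DifferentiableAt ℝ V x := (h.potential_contDiffOn.contDiffAt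
    (isOpen_compl_singleton.mem_nhds hx)).differentiableAt one_ne_zero
  have heuler : eulerDeriv (fun y => V y - τ) x = eulerDeriv V x := by
    simp only [eulerDeriv, fderiv_sub_const]
  rw [divergence_morawetzFlux (hasFDerivAt_regInvNorm hδ x) (hasFDerivAt_morawetzCoeff hδ x)
    (hasFDerivAt_morawetzCoeffSlope hδ x) (two_mul_morawetzCoeff hδ x) (hVx.sub_const τ)
    h.contDiff, heuler]
  have ha := regInvNorm_pos hδ x
  have hsource := h.neg_inner_multiplier_le (by omega) hδ hx
  have hgradient := ballWeight_mul_gradNorm_sq_le hδ u x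
  have hhardy := mul_le_mul_of_nonneg_right (hardyConst_mul_le hd hδ x) (sq_nonneg ‖u x‖)
  have hrepulsive := mul_le_mul_of_nonneg_left (hV.eulerDeriv_le hx)
    (by positivity : 0 ≤ regInvNorm δ x * ‖u x‖ ^ 2)
  have hsplit : (1 - η) * hardyConst d / ‖x‖ ^ 2 * (regInvNorm δ x * ‖u x‖ ^ 2)
      = (1 - η) * hardyConst d * ‖u x‖ ^ 2 * (regInvNorm δ x / ‖x‖ ^ 2) := by ring
  rw [morawetzIntegrand, hardyGap]
  linarith

theorem lintegral_morawetzIntegrand_le (h : ResolventSolution ε τ V u f) (hV : IsRepulsive γ η V)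
    (hd : 3 < d) (hγ : 0 ≤ γ) (hη : 0 ≤ η) (hδ : 0 < δ) :
    ∫⁻ x, ENNReal.ofReal (morawetzIntegrand γ η δ V u x) ≤
      ENNReal.ofReal (morawetzSource ε u f + hardyConst d * ∫ x, hardyGap δ u x) := by
  have ha := (contDiff_regInvNorm (E := Ed d) hδ (n := 0)).continuous.measurable
  have he := (contDiff_ballWeight (E := Ed d) hδ (n := 0)).continuous.measurable
  have hum := h.measurable
  have hgm := h.measurable_gradNorm
  have hVm := h.measurable_potential
  have hfg := h.integrable_source_mul_gradNorm
  have hfu := (h.integrable_source_mul_div_norm (by omega)).const_mul ((d : ℝ) / 2)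
  have hug := h.integrable_norm_mul_gradNorm.const_mul |ε|
  have hgap := (h.integrable_hardyGap hd hδ).const_mul (hardyConst d)
  have hsource : morawetzSource ε u f + hardyConst d * ∫ x, hardyGap δ u x =
      ∫ x, (‖f x‖ * gradNorm u x + d / 2 * (‖f x‖ * ‖u x‖ / ‖x‖)
        + |ε| * (‖u x‖ * gradNorm u x) + hardyConst d * hardyGap δ u x) := by
    rw [integral_add (by exact (hfg.add hfu).add hug) hgap,
      integral_add (by exact hfg.add hfu) hug, integral_add hfg hfu, integral_const_mul,
      integral_const_mul, integral_const_mul, morawetzSource]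
  rw [hsource]
  refine lintegral_le_of_le_add_divergence (by omega) (fun i => contDiffOn_morawetzFlux
    (contDiff_regInvNorm hδ) (contDiff_morawetzCoeff hδ) (contDiff_morawetzCoeffSlope hδ)
    (h.potential_contDiffOn.sub (contDiffOn_const (c := τ))) h.contDiff i)
    (h.integrable_morawetzFlux_div_norm (by omega) hδ) (((hfg.add hfu).add hug).add hgap)
    (by unfold morawetzIntegrand; fun_prop) (fun x => ?_)
    fun x hx => h.morawetzIntegrand_le_add_divergence hV hd.le hδ hx
  have := regInvNorm_pos hδ x
  have := ballWeight_nonneg hδ x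
  have := hardyConst_pos hd
  have := h.potential_nonneg x
  unfold morawetzIntegrand
  positivity

end ResolventSolution

end MorawetzInequality

section MorawetzConsequences

variable {d : ℕ}

lemma morawetzSource_nonneg (ε : ℝ) (u f : Ed d → ℂ) : 0 ≤ morawetzSource ε u f := by
  have hfg : 0 ≤ ∫ x, ‖f x‖ * gradNorm u x :=
    integral_nonneg fun x => mul_nonneg (norm_nonneg _) (gradNorm_nonneg u x)
  have hug : 0 ≤ ∫ x, ‖u x‖ * gradNorm u x :=
    integral_nonneg fun x => mul_nonneg (norm_nonneg _) (gradNorm_nonneg u x)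
  unfold morawetzSource
  positivity

lemma integral_source_mul_div_norm_le_morawetzSource (hd : 2 ≤ d) (ε : ℝ) (u f : Ed d → ℂ) :
    ∫ x, ‖f x‖ * ‖u x‖ / ‖x‖ ≤ morawetzSource ε u f := by
  have hfg : 0 ≤ ∫ x, ‖f x‖ * gradNorm u x :=
    integral_nonneg fun x => mul_nonneg (norm_nonneg _) (gradNorm_nonneg u x)
  have hfu : 0 ≤ ∫ x, ‖f x‖ * ‖u x‖ / ‖x‖ := integral_nonneg fun x => by positivity
  have hug : 0 ≤ |ε| * ∫ x, ‖u x‖ * gradNorm u x := mul_nonneg (abs_nonneg ε)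
    (integral_nonneg fun x => mul_nonneg (norm_nonneg _) (gradNorm_nonneg u x))
  have hd' : (1 : ℝ) ≤ d / 2 := by
    rw [le_div_iff₀ two_pos]
    exact_mod_cast hd
  have := le_mul_of_one_le_left hfu hd'
  unfold morawetzSource
  linarith

namespace ResolventSolution

variable {γ η ε τ δ : ℝ} {V : Ed d → ℝ} {u f : Ed d → ℂ}

lemma tendsto_integral_hardyGap (h : ResolventSolution ε τ V u f) (hd : 3 < d) :
    Tendsto (fun n : ℕ => ∫ x, hardyGap (1 / ((n : ℝ) + 1)) u x) atTop (𝓝 0) := by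
  have hδ (n : ℕ) : (0 : ℝ) < 1 / ((n : ℝ) + 1) := by positivity
  rw [← integral_zero (Ed d) ℝ (μ := volume)]
  refine tendsto_integral_of_dominated_convergence (fun x => ‖u x‖ ^ 2 / ‖x‖ ^ 3)
    (fun n => (h.integrable_hardyGap hd (hδ n)).aestronglyMeasurable)
    (h.integrable_sq_div_norm_pow hd) (fun n => ?_) ?_
  · filter_upwards [ae_ne_zero (by omega : 0 < d)] with x hx
    rw [Real.norm_of_nonneg (hardyGap_nonneg (hδ n) u hx)]
    exact hardyGap_le (hδ n) u hx
  · filter_upwards [ae_ne_zero (by omega : 0 < d)] with x hx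
    have ha := tendsto_regInvNorm hx
    have hlimit : (‖x‖⁻¹ / ‖x‖ ^ 2 - ‖x‖⁻¹ ^ 3) * ‖u x‖ ^ 2 = 0 := by
      rw [div_eq_mul_inv, ← inv_pow, ← pow_succ', sub_self, zero_mul]
    rw [← hlimit]
    exact ((ha.div_const _).sub (ha.pow 3)).mul_const _

lemma lintegral_hardy_add_potential_regInvNorm_le (h : ResolventSolution ε τ V u f)
    (hV : IsRepulsive γ η V) (hd : 3 < d) (hγ : 0 ≤ γ) (hη : 0 ≤ η) (hδ : 0 < δ) :
    ∫⁻ x, ENNReal.ofReal (γ / 2 * (V x * ‖u x‖ ^ 2) * regInvNorm δ x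
        + η * hardyConst d * ‖u x‖ ^ 2 * (regInvNorm δ x / ‖x‖ ^ 2)) ≤
      ENNReal.ofReal (morawetzSource ε u f + hardyConst d * ∫ x, hardyGap δ u x) := by
  refine (lintegral_mono fun x => ENNReal.ofReal_le_ofReal ?_).trans
    (h.lintegral_morawetzIntegrand_le hV hd hγ hη hδ)
  have := mul_nonneg (ballWeight_nonneg hδ x) (sq_nonneg (gradNorm u x))
  rw [morawetzIntegrand]
  linarith

lemma lintegral_hardy_add_potential_le (h : ResolventSolution ε τ V u f)
    (hV : IsRepulsive γ η V) (hd : 3 < d) (hγ : 0 ≤ γ) (hη : 0 ≤ η) :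
    ∫⁻ x, ENNReal.ofReal (γ / 2 * (V x * ‖u x‖ ^ 2) * ‖x‖⁻¹
        + η * hardyConst d * ‖u x‖ ^ 2 * (‖x‖⁻¹ / ‖x‖ ^ 2)) ≤
      ENNReal.ofReal (morawetzSource ε u f) := by
  have hδ (n : ℕ) : (0 : ℝ) < 1 / ((n : ℝ) + 1) := by positivity
  have hum := h.measurable
  have hVm := h.measurable_potential
  set G : ℕ → Ed d → ℝ≥0∞ := fun n x => ENNReal.ofReal
    (γ / 2 * (V x * ‖u x‖ ^ 2) * regInvNorm (1 / ((n : ℝ) + 1)) x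
      + η * hardyConst d * ‖u x‖ ^ 2 * (regInvNorm (1 / ((n : ℝ) + 1)) x / ‖x‖ ^ 2)) with hG
  have hGm (n : ℕ) : Measurable (G n) := by
    have ha := (contDiff_regInvNorm (E := Ed d) (hδ n) (n := 0)).continuous.measurable
    simp only [hG]
    fun_prop
  have hGle (n : ℕ) := h.lintegral_hardy_add_potential_regInvNorm_le hV hd hγ hη (hδ n)
  have hGlim : ∀ᵐ x : Ed d, Tendsto (fun n => G n x) atTop (𝓝 (ENNReal.ofReal
      (γ / 2 * (V x * ‖u x‖ ^ 2) * ‖x‖⁻¹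
        + η * hardyConst d * ‖u x‖ ^ 2 * (‖x‖⁻¹ / ‖x‖ ^ 2)))) := by
    filter_upwards [ae_ne_zero (by omega : 0 < d)] with x hx
    have ha := tendsto_regInvNorm hx
    exact ENNReal.tendsto_ofReal ((ha.const_mul _).add ((ha.div_const _).const_mul _))
  have hbound : Tendsto (fun n : ℕ => ENNReal.ofReal (morawetzSource ε u f
      + hardyConst d * ∫ x, hardyGap (1 / ((n : ℝ) + 1)) u x)) atTop
      (𝓝 (ENNReal.ofReal (morawetzSource ε u f))) :=
    ENNReal.tendsto_ofReal (by
      simpa using ((h.tendsto_integral_hardyGap hd).const_mul (hardyConst d)).const_add _)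
  calc _ = ∫⁻ x, liminf (fun n => G n x) atTop :=
        lintegral_congr_ae (hGlim.mono fun x hx => hx.liminf_eq.symm)
    _ ≤ liminf (fun n => ∫⁻ x, G n x) atTop := lintegral_liminf_le hGm
    _ ≤ _ := (liminf_le_liminf (.of_forall hGle)).trans_eq hbound.liminf_eq

lemma integral_sq_div_norm_cube_le (h : ResolventSolution ε τ V u f) (hV : IsRepulsive γ η V)
    (hd : 3 < d) (hγ : 0 ≤ γ) (hη : 0 < η) :
    ∫ x, ‖u x‖ ^ 2 / ‖x‖ ^ 3 ≤ 1 / (η * hardyConst d) * morawetzSource ε u f := by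
  have hκ := hardyConst_pos hd
  have hle : ∫⁻ x, ENNReal.ofReal (η * hardyConst d * (‖u x‖ ^ 2 / ‖x‖ ^ 3)) ≤
      ENNReal.ofReal (morawetzSource ε u f) := by
    refine (lintegral_mono fun x => ENNReal.ofReal_le_ofReal ?_).trans
      (h.lintegral_hardy_add_potential_le hV hd hγ hη.le)
    have := h.potential_nonneg x
    calc η * hardyConst d * (‖u x‖ ^ 2 / ‖x‖ ^ 3)
        = η * hardyConst d * ‖u x‖ ^ 2 * (‖x‖⁻¹ / ‖x‖ ^ 2) := by
          rw [div_eq_mul_inv, div_eq_mul_inv, ← inv_pow, ← inv_pow]; ring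
      _ ≤ _ := le_add_of_nonneg_left (by positivity)
  have := integral_le_of_lintegral_le (morawetzSource_nonneg ε u f)
    ((h.integrable_sq_div_norm_pow hd).const_mul _) (fun x => by positivity) hle
  rw [integral_const_mul] at this
  rw [one_div_mul_eq_div, le_div_iff₀ (by positivity)]
  linarith

lemma lintegral_potential_div_norm_le (h : ResolventSolution ε τ V u f) (hV : IsRepulsive γ η V)
    (hd : 3 < d) (hγ : 0 < γ) (hη : 0 ≤ η) :
    ∫⁻ x, ENNReal.ofReal (V x * ‖u x‖ ^ 2 / ‖x‖) ≤
      ENNReal.ofReal (2 / γ * morawetzSource ε u f) := by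
  have hκ := hardyConst_pos hd
  rw [ENNReal.ofReal_mul (by positivity)]
  calc ∫⁻ x, ENNReal.ofReal (V x * ‖u x‖ ^ 2 / ‖x‖)
      = ∫⁻ x, ENNReal.ofReal (2 / γ) *
          ENNReal.ofReal (γ / 2 * (V x * ‖u x‖ ^ 2) * ‖x‖⁻¹) := by
        refine lintegral_congr fun x => ?_
        rw [← ENNReal.ofReal_mul (by positivity)]
        congr 1
        field_simp
    _ = ENNReal.ofReal (2 / γ) *
          ∫⁻ x, ENNReal.ofReal (γ / 2 * (V x * ‖u x‖ ^ 2) * ‖x‖⁻¹) :=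
        lintegral_const_mul' _ _ ENNReal.ofReal_ne_top
    _ ≤ _ := by
        gcongr
        refine (lintegral_mono fun x => ENNReal.ofReal_le_ofReal ?_).trans
          (h.lintegral_hardy_add_potential_le hV hd hγ.le hη)
        exact le_add_of_nonneg_right (by positivity)

lemma integrable_potential_div_norm (h : ResolventSolution ε τ V u f) (hV : IsRepulsive γ η V)
    (hd : 3 < d) (hγ : 0 < γ) (hη : 0 ≤ η) : Integrable fun x => V x * ‖u x‖ ^ 2 / ‖x‖ := by
  have hum := h.measurable
  have hVm := h.measurable_potential
  refine integrable_of_lintegral_le (by fun_prop) (fun x => ?_)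
    (h.lintegral_potential_div_norm_le hV hd hγ hη)
  have := h.potential_nonneg x
  positivity

lemma lintegral_ballWeight_mul_gradNorm_sq_le (h : ResolventSolution ε τ V u f)
    (hV : IsRepulsive γ η V) (hd : 3 < d) (hγ : 0 ≤ γ) (hη : 0 < η) (hδ : 0 < δ) :
    ∫⁻ x, ENNReal.ofReal (ballWeight δ x * gradNorm u x ^ 2) ≤
      ENNReal.ofReal ((1 + 1 / η) * morawetzSource ε u f) := by
  have hκ := hardyConst_pos hd
  have hgap : ∫ x, hardyGap δ u x ≤ 1 / (η * hardyConst d) * morawetzSource ε u f := by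
    refine le_trans (integral_mono_ae (h.integrable_hardyGap hd hδ)
      (h.integrable_sq_div_norm_pow hd) ?_) (h.integral_sq_div_norm_cube_le hV hd hγ hη)
    filter_upwards [ae_ne_zero (by omega : 0 < d)] with x hx using hardyGap_le hδ u hx
  calc ∫⁻ x, ENNReal.ofReal (ballWeight δ x * gradNorm u x ^ 2)
      ≤ ∫⁻ x, ENNReal.ofReal (morawetzIntegrand γ η δ V u x) := by
        refine lintegral_mono fun x => ENNReal.ofReal_le_ofReal ?_
        have := h.potential_nonneg x
        have := regInvNorm_pos hδ x
        rw [morawetzIntegrand, add_assoc]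
        exact le_add_of_nonneg_right (by positivity)
    _ ≤ ENNReal.ofReal (morawetzSource ε u f + hardyConst d * ∫ x, hardyGap δ u x) :=
        h.lintegral_morawetzIntegrand_le hV hd hγ hη.le hδ
    _ ≤ ENNReal.ofReal (morawetzSource ε u f
          + hardyConst d * (1 / (η * hardyConst d) * morawetzSource ε u f)) := by gcongr
    _ = ENNReal.ofReal ((1 + 1 / η) * morawetzSource ε u f) := by
        congr 1
        field_simp

lemma integrable_ballWeight_mul_gradNorm_sq (h : ResolventSolution ε τ V u f) (hδ : 0 < δ) :
    Integrable fun x => ballWeight δ x * gradNorm u x ^ 2 := by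
  have he := (contDiff_ballWeight (E := Ed d) hδ (n := 0)).continuous.measurable
  have hgm := h.measurable_gradNorm
  refine (h.integrable_gradNorm_sq.const_mul δ⁻¹).mono' (by fun_prop) (.of_forall fun x => ?_)
  have he0 := ballWeight_nonneg hδ x
  rw [Real.norm_of_nonneg (by positivity)]
  gcongr
  exact (ballWeight_le_regInvNorm hδ x).trans (regInvNorm_le_inv hδ x)

end ResolventSolution

end MorawetzConsequences

section LocalizedEstimates

variable {d : ℕ}

/-- The constant, in terms of the Morawetz source, of the estimates of `max 0 τ * |u|²` and
`|ε| * |u|²` localized by `ballWeight`. -/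
def localConst (d : ℕ) (γ η : ℝ) : ℝ :=
  5 / 2 * (1 + 1 / η) + 3 / 2 * (1 / (η * hardyConst d)) + 2 / γ + 1

lemma localConst_pos {γ η : ℝ} (hd : 3 < d) (hγ : 0 < γ) (hη : 0 < η) :
    0 < localConst d γ η := by
  have := hardyConst_pos hd
  unfold localConst
  positivity

/-- A majorant of the error terms of the energy and charge identities localized by
`ballWeight δ`. -/
def localError (δ : ℝ) (V : Ed d → ℝ) (u f : Ed d → ℂ) (x : Ed d) : ℝ :=
  5 / 2 * (ballWeight δ x * gradNorm u x ^ 2) + 3 / 2 * (‖u x‖ ^ 2 / ‖x‖ ^ 3)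
    + V x * ‖u x‖ ^ 2 / ‖x‖ + ‖f x‖ * ‖u x‖ / ‖x‖

lemma ballWeight_le_inv_norm {δ : ℝ} (hδ : 0 < δ) {x : Ed d} (hx : x ≠ 0) :
    ballWeight δ x ≤ ‖x‖⁻¹ :=
  (ballWeight_le_regInvNorm hδ x).trans (regInvNorm_le_inv_norm hδ hx)

lemma ballWeight_deriv_error_le {δ : ℝ} (hδ : 0 < δ) (u : Ed d → ℂ) {x : Ed d} (hx : x ≠ 0) :
    3 * δ ^ 2 * regInvNorm δ x ^ 5 * (‖u x‖ * (‖x‖ * gradNorm u x)) ≤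
      3 / 2 * (ballWeight δ x * gradNorm u x ^ 2) + 3 / 2 * (‖u x‖ ^ 2 / ‖x‖ ^ 3) := by
  have ha := regInvNorm_pos hδ x
  have hg := gradNorm_nonneg u x
  have he := ballWeight_nonneg hδ x
  have hax : regInvNorm δ x * ‖x‖ ≤ 1 := regInvNorm_mul_norm_le_one hδ x
  calc 3 * δ ^ 2 * regInvNorm δ x ^ 5 * (‖u x‖ * (‖x‖ * gradNorm u x))
      = 3 * (ballWeight δ x * regInvNorm δ x) * (‖u x‖ * gradNorm u x)
          * (regInvNorm δ x * ‖x‖) := by rw [ballWeight]; ring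
    _ ≤ 3 * (ballWeight δ x * regInvNorm δ x) * (‖u x‖ * gradNorm u x) :=
        mul_le_of_le_one_right (by positivity) hax
    _ ≤ 3 / 2 * (ballWeight δ x * gradNorm u x ^ 2)
          + 3 / 2 * (ballWeight δ x * regInvNorm δ x ^ 2 * ‖u x‖ ^ 2) := by
        nlinarith [mul_nonneg he (sq_nonneg (gradNorm u x - regInvNorm δ x * ‖u x‖))]
    _ ≤ 3 / 2 * (ballWeight δ x * gradNorm u x ^ 2)
          + 3 / 2 * (‖x‖⁻¹ * ‖x‖⁻¹ ^ 2 * ‖u x‖ ^ 2) := by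
        gcongr
        · exact ballWeight_le_inv_norm hδ hx
        · exact regInvNorm_le_inv_norm hδ hx
    _ = 3 / 2 * (ballWeight δ x * gradNorm u x ^ 2) + 3 / 2 * (‖u x‖ ^ 2 / ‖x‖ ^ 3) := by
        rw [← pow_succ', inv_pow, inv_mul_eq_div]

namespace ResolventSolution

variable {γ η ε τ δ : ℝ} {V : Ed d → ℝ} {u f : Ed d → ℂ}

lemma integrable_localError (h : ResolventSolution ε τ V u f) (hV : IsRepulsive γ η V)
    (hd : 3 < d) (hγ : 0 < γ) (hη : 0 ≤ η) (hδ : 0 < δ) : Integrable (localError δ V u f) :=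
  ((((h.integrable_ballWeight_mul_gradNorm_sq hδ).const_mul _).add
    ((h.integrable_sq_div_norm_pow hd).const_mul _)).add
    (h.integrable_potential_div_norm hV hd hγ hη)).add
    (h.integrable_source_mul_div_norm (by omega))

lemma integral_localError_le (h : ResolventSolution ε τ V u f) (hV : IsRepulsive γ η V)
    (hd : 3 < d) (hγ : 0 < γ) (hη : 0 < η) (hδ : 0 < δ) :
    ∫ x, localError δ V u f x ≤ localConst d γ η * morawetzSource ε u f := by
  have hG := morawetzSource_nonneg ε u f
  have hgradI := h.integrable_ballWeight_mul_gradNorm_sq hδ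
  have hpotI := h.integrable_potential_div_norm hV hd hγ hη.le
  have hcubeI := h.integrable_sq_div_norm_pow hd
  have hgrad := integral_le_of_lintegral_le (by positivity) hgradI
    (fun x => mul_nonneg (ballWeight_nonneg hδ x) (sq_nonneg _))
    (h.lintegral_ballWeight_mul_gradNorm_sq_le hV hd hγ.le hη hδ)
  have hcube := h.integral_sq_div_norm_cube_le hV hd hγ.le hη
  have hpot := integral_le_of_lintegral_le (by positivity) hpotI
    (fun x => div_nonneg (mul_nonneg (h.potential_nonneg x) (sq_nonneg _)) (norm_nonneg _))
    (h.lintegral_potential_div_norm_le hV hd hγ hη.le)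
  have hsource := integral_source_mul_div_norm_le_morawetzSource (by omega) ε u f
  unfold localError
  rw [integral_add (by exact ((hgradI.const_mul _).add (hcubeI.const_mul _)).add hpotI)
      (h.integrable_source_mul_div_norm (by omega)),
    integral_add (by exact (hgradI.const_mul _).add (hcubeI.const_mul _)) hpotI,
    integral_add (hgradI.const_mul _) (hcubeI.const_mul _), integral_const_mul,
    integral_const_mul, localConst]
  linarith

lemma le_localError (h : ResolventSolution ε τ V u f) (hδ : 0 < δ) {x : Ed d} (hx : x ≠ 0) :
    ballWeight δ x * (gradNorm u x ^ 2 + V x * ‖u x‖ ^ 2 + ‖f x‖ * ‖u x‖)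
        + 3 * δ ^ 2 * regInvNorm δ x ^ 5 * (‖u x‖ * (‖x‖ * gradNorm u x)) ≤
      localError δ V u f x := by
  have he := ballWeight_le_inv_norm hδ hx
  have hpot : ballWeight δ x * (V x * ‖u x‖ ^ 2) ≤ V x * ‖u x‖ ^ 2 / ‖x‖ := by
    rw [← inv_mul_eq_div]
    exact mul_le_mul_of_nonneg_right he (mul_nonneg (h.potential_nonneg x) (sq_nonneg _))
  have hsource : ballWeight δ x * (‖f x‖ * ‖u x‖) ≤ ‖f x‖ * ‖u x‖ / ‖x‖ := by
    rw [← inv_mul_eq_div]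
    gcongr
  have hderiv := ballWeight_deriv_error_le hδ u hx
  rw [localError]
  linarith

lemma lintegral_ballWeight_mul_sq_le (h : ResolventSolution ε τ V u f) (hV : IsRepulsive γ η V)
    (hd : 3 < d) (hγ : 0 < γ) (hη : 0 < η) (hδ : 0 < δ) {ω : ℂ} {s : ℝ} (hs : 0 ≤ s)
    (hω : ‖ω‖ ≤ 1) (hsω : s ≤ -(ω.re * τ) + ω.im * ε) :
    ∫⁻ x, ENNReal.ofReal (s * (ballWeight δ x * ‖u x‖ ^ 2)) ≤
      ENNReal.ofReal (localConst d γ η * morawetzSource ε u f) := by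
  have he := (contDiff_ballWeight (E := Ed d) hδ (n := 0)).continuous.measurable
  have hum := h.measurable
  have he0 := ballWeight_nonneg (E := Ed d) hδ
  refine (h.lintegral_le_of_radial_multiplier (by omega) hω (contDiff_ballWeight hδ)
    (hasFDerivAt_ballWeight hδ) he0
    (fun x => (ballWeight_le_regInvNorm hδ x).trans (regInvNorm_le_inv hδ x))
    (fun x => ?_) (h.integrable_localError hV hd hγ hη.le hδ) (by fun_prop) (fun x => ?_)
    fun x hx => ?_).trans (ENNReal.ofReal_le_ofReal (h.integral_localError_le hV hd hγ hη hδ))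
  · have := regInvNorm_pos hδ x
    positivity
  · have := he0 x
    positivity
  · have hre : -1 ≤ ω.re := (abs_le.1 ((Complex.abs_re_le_norm ω).trans hω)).1
    have hmain := mul_le_mul_of_nonneg_right hsω (mul_nonneg (he0 x) (sq_nonneg ‖u x‖))
    have henergy := mul_le_mul_of_nonneg_right hre (mul_nonneg (he0 x)
      (add_nonneg (sq_nonneg (gradNorm u x)) (mul_nonneg (h.potential_nonneg x)
        (sq_nonneg ‖u x‖))))
    linarith [h.le_localError hδ hx]

lemma lintegral_energy_ballWeight_le (h : ResolventSolution ε τ V u f) (hV : IsRepulsive γ η V)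
    (hd : 3 < d) (hγ : 0 < γ) (hη : 0 < η) (hδ : 0 < δ) :
    ∫⁻ x, ENNReal.ofReal (max 0 τ * (ballWeight δ x * ‖u x‖ ^ 2)) ≤
      ENNReal.ofReal (localConst d γ η * morawetzSource ε u f) := by
  rcases le_total τ 0 with hτ | hτ
  · simp [max_eq_left hτ]
  · rw [max_eq_right hτ]
    exact h.lintegral_ballWeight_mul_sq_le hV hd hγ hη hδ hτ (ω := -1) (by simp)
      (by simp)

lemma lintegral_charge_ballWeight_le (h : ResolventSolution ε τ V u f) (hV : IsRepulsive γ η V)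
    (hd : 3 < d) (hγ : 0 < γ) (hη : 0 < η) (hδ : 0 < δ) :
    ∫⁻ x, ENNReal.ofReal (|ε| * (ballWeight δ x * ‖u x‖ ^ 2)) ≤
      ENNReal.ofReal (localConst d γ η * morawetzSource ε u f) := by
  obtain ⟨ω, hω, hωre, hωε⟩ := exists_phase_im_mul_eq_abs ε
  exact h.lintegral_ballWeight_mul_sq_le hV hd hγ hη hδ (abs_nonneg ε) hω
    (by simp [hωre, hωε])

end ResolventSolution

end LocalizedEstimates

section MorreyCampanato

variable {d : ℕ}

lemma exists_mem_shell {x : Ed d} (hx : x ≠ 0) : ∃ j : ℤ, x ∈ shell d j :=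
  exists_mem_Ioc_zpow (norm_pos_iff.2 hx) one_lt_two

lemma setLIntegral_ball_le_nX2 (g : Ed d → ℝ≥0∞) {R : ℝ} (hR : 0 < R) :
    ∫⁻ x in ball (0 : Ed d) R, g x ≤ ENNReal.ofReal R * nX2 g := by
  have hle : (ENNReal.ofReal R)⁻¹ * ∫⁻ x in ball (0 : Ed d) R, g x ≤ nX2 g :=
    le_iSup₂ (f := fun (R : ℝ) (_ : 0 < R) =>
      (ENNReal.ofReal R)⁻¹ * ∫⁻ x in ball (0 : Ed d) R, g x) R hR
  rwa [ENNReal.inv_mul_le_iff (ENNReal.ofReal_pos.2 hR).ne' ENNReal.ofReal_ne_top] at hle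

lemma setLIntegral_shell_le_nX2 (g : Ed d → ℝ≥0∞) (j : ℤ) :
    ∫⁻ x in shell d j, g x ≤ ENNReal.ofReal (2 ^ (j + 1)) * (2 * nX2 g) := by
  have hr : (0 : ℝ) < 2 ^ (j + 1) := by positivity
  have hsub : shell d j ⊆ ball 0 (2 ^ (j + 1) * 2) := fun x hx =>
    mem_ball_zero_iff.2 (hx.2.trans_lt (by linarith))
  calc ∫⁻ x in shell d j, g x ≤ ∫⁻ x in ball 0 (2 ^ (j + 1) * 2), g x := lintegral_mono_set hsub
    _ ≤ ENNReal.ofReal (2 ^ (j + 1) * 2) * nX2 g := setLIntegral_ball_le_nX2 g (by positivity)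
    _ = ENNReal.ofReal (2 ^ (j + 1)) * (2 * nX2 g) := by
        rw [ENNReal.ofReal_mul hr.le, ENNReal.ofReal_ofNat, mul_assoc]

lemma nX2_const_mul (g : Ed d → ℝ≥0∞) {c : ℝ≥0∞} (hc : c ≠ ⊤) :
    nX2 (fun x => c * g x) = c * nX2 g := by
  simp only [nX2, ENNReal.mul_iSup, lintegral_const_mul' _ _ hc, mul_left_comm c]

lemma lintegral_mul_le_nXstar_mul_nX2 (hd : 0 < d) {g w : Ed d → ℝ≥0∞} (hg : Measurable g)
    (hw : Measurable w) :
    ∫⁻ x, g x * w x ≤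
      nXstar (fun x => g x ^ 2) * (2 * nX2 fun x => w x ^ 2) ^ (1 / 2 : ℝ) := by
  have hhalf : (0 : ℝ) ≤ 1 / 2 := by norm_num
  have hcover : ∫⁻ x, g x * w x ≤ ∫⁻ x in ⋃ j, shell d j, g x * w x := by
    rw [← setLIntegral_univ]
    refine lintegral_mono_set' ?_
    filter_upwards [ae_ne_zero hd] with x hx _
    exact mem_iUnion.2 (exists_mem_shell hx)
  refine hcover.trans ((lintegral_iUnion_le _ _).trans ?_)
  rw [nXstar, ← ENNReal.tsum_mul_right]
  refine ENNReal.tsum_le_tsum fun j => ?_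
  calc ∫⁻ x in shell d j, g x * w x
      ≤ (∫⁻ x in shell d j, g x ^ 2) ^ (1 / 2 : ℝ)
          * (∫⁻ x in shell d j, w x ^ 2) ^ (1 / 2 : ℝ) := by
        simpa only [ENNReal.rpow_two, Pi.mul_apply] using
          ENNReal.lintegral_mul_le_Lp_mul_Lq (volume.restrict (shell d j))
            Real.HolderConjugate.two_two hg.aemeasurable hw.aemeasurable
    _ ≤ (∫⁻ x in shell d j, g x ^ 2) ^ (1 / 2 : ℝ) * (ENNReal.ofReal (2 ^ (j + 1))
          * (2 * nX2 fun x => w x ^ 2)) ^ (1 / 2 : ℝ) := by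
        gcongr
        exact setLIntegral_shell_le_nX2 _ j
    _ = _ := by
        rw [ENNReal.mul_rpow_of_nonneg (ENNReal.ofReal _) _ hhalf,
          ENNReal.mul_rpow_of_nonneg (ENNReal.ofReal _) _ hhalf]
        ring

lemma integral_mul_le_of_nXstar_le_of_nX2_le (hd : 0 < d) {g w : Ed d → ℝ} (hg : Measurable g)
    (hw : Measurable w) (hg0 : ∀ x, 0 ≤ g x) (hw0 : ∀ x, 0 ≤ w x)
    (hi : Integrable fun x => g x * w x) {N c S : ℝ} (hN0 : 0 ≤ N)
    (hN : nXstar (fun x => ENNReal.ofReal (g x ^ 2)) ≤ ENNReal.ofReal N) (hc : 0 ≤ c) (hS : 0 ≤ S)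
    (hA : nX2 (fun x => ENNReal.ofReal (w x ^ 2)) ≤ ENNReal.ofReal (c * S)) :
    ∫ x, g x * w x ≤ √(2 * c) * N * √S := by
  refine integral_le_of_lintegral_le (by positivity) hi (fun x => mul_nonneg (hg0 x) (hw0 x)) ?_
  have hduality := lintegral_mul_le_nXstar_mul_nX2 hd hg.ennreal_ofReal hw.ennreal_ofReal
  simp only [← ENNReal.ofReal_pow (hg0 _), ← ENNReal.ofReal_pow (hw0 _),
    ← ENNReal.ofReal_mul (hg0 _)] at hduality
  have hsqrt : √(2 * c) * N * √S = N * √(2 * (c * S)) := by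
    rw [← mul_assoc 2, Real.sqrt_mul (by positivity : 0 ≤ 2 * c)]
    ring
  calc ∫⁻ x, ENNReal.ofReal (g x * w x)
      ≤ ENNReal.ofReal N * (2 * ENNReal.ofReal (c * S)) ^ (1 / 2 : ℝ) :=
        hduality.trans (by gcongr)
    _ = ENNReal.ofReal (√(2 * c) * N * √S) := by
        rw [hsqrt, ENNReal.ofReal_mul hN0, Real.sqrt_eq_rpow,
          ← ENNReal.ofReal_rpow_of_nonneg (by positivity) (by norm_num),
          ENNReal.ofReal_mul zero_le_two, ENNReal.ofReal_ofNat]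

lemma nX2_le_of_lintegral_ballWeight_le {g : Ed d → ℝ} (hg : ∀ x, 0 ≤ g x) {A : ℝ}
    (hA : ∀ R, 0 < R → ∫⁻ x, ENNReal.ofReal (ballWeight R x * g x) ≤ ENNReal.ofReal A) :
    nX2 (fun x => ENNReal.ofReal (g x)) ≤ ENNReal.ofReal (3 * A) := by
  rw [ENNReal.ofReal_mul zero_le_three]
  refine iSup₂_le fun R hR => ?_
  rw [← ENNReal.ofReal_inv_of_pos hR, ← lintegral_const_mul' _ _ ENNReal.ofReal_ne_top]
  calc ∫⁻ x in ball 0 R, ENNReal.ofReal R⁻¹ * ENNReal.ofReal (g x)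
      ≤ ∫⁻ x in ball 0 R, ENNReal.ofReal 3 * ENNReal.ofReal (ballWeight R x * g x) := by
        refine setLIntegral_mono' measurableSet_ball fun x hx => ?_
        rw [← ENNReal.ofReal_mul (by positivity), ← ENNReal.ofReal_mul zero_le_three, ← mul_assoc]
        exact ENNReal.ofReal_le_ofReal
          (mul_le_mul_of_nonneg_right (inv_le_three_mul_ballWeight hR hx) (hg x))
    _ ≤ ∫⁻ x, ENNReal.ofReal 3 * ENNReal.ofReal (ballWeight R x * g x) :=
        setLIntegral_le_lintegral _ _
    _ = ENNReal.ofReal 3 * ∫⁻ x, ENNReal.ofReal (ballWeight R x * g x) :=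
        lintegral_const_mul' _ _ ENNReal.ofReal_ne_top
    _ ≤ ENNReal.ofReal 3 * ENNReal.ofReal A := by gcongr; exact hA R hR

lemma inv_pow_mul_setLIntegral_ball_le (g : Ed d → ℝ≥0∞) (k : ℕ) {R : ℝ} (hR : 0 < R) :
    (ENNReal.ofReal (R ^ k))⁻¹ * ∫⁻ x in ball (0 : Ed d) R, g x ≤
      ∫⁻ x, g x / ENNReal.ofReal (‖x‖ ^ k) := by
  rw [← ENNReal.ofReal_inv_of_pos (pow_pos hR k),
    ← lintegral_const_mul' _ _ ENNReal.ofReal_ne_top, ENNReal.ofReal_inv_of_pos (pow_pos hR k)]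
  refine le_trans (setLIntegral_mono' measurableSet_ball fun x hx => ?_)
    (setLIntegral_le_lintegral (ball 0 R) _)
  rw [mul_comm, ← div_eq_mul_inv]
  gcongr
  exact (mem_ball_zero_iff.1 hx).le

end MorreyCampanato

section Estimates

variable {d : ℕ}

lemma usq_eq_ofReal (u : Ed d → ℂ) : usq u = fun x => ENNReal.ofReal (‖u x‖ ^ 2) := by
  funext x
  rw [usq, ENNReal.ofReal_pow (norm_nonneg _), ofReal_norm, enorm_eq_nnnorm]

lemma gradSq_eq_ofReal (u : Ed d → ℂ) :
    gradSq u = fun x => ENNReal.ofReal (gradNorm u x ^ 2) := by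
  funext x
  rw [gradSq, gradNorm_sq, ENNReal.ofReal_sum_of_nonneg fun i _ => sq_nonneg _]
  refine Finset.sum_congr rfl fun i _ => ?_
  rw [ENNReal.ofReal_pow (norm_nonneg _), ofReal_norm, enorm_eq_nnnorm]
  rfl

lemma le_sq_of_le_mul_sqrt {x c : ℝ} (hx : 0 ≤ x) (h : x ≤ c * √x) : x ≤ c ^ 2 := by
  have hsq := Real.sq_sqrt hx
  nlinarith [sq_nonneg (c - √x)]

/-- The constant in the bound of the square root of the Morawetz source by `‖f‖_{X*}`. -/
def sourceConst (d : ℕ) (γ η : ℝ) : ℝ :=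
  √(2 * (3 * (1 + 1 / η))) + d / 2 * √(2 * (1 / (η * hardyConst d)))
    + √(2 * (3 * (2 * localConst d γ η)))

/-- The constant in the bound of the left-hand side of the resolvent estimate by the Morawetz
source. -/
def estimateConst (d : ℕ) (γ η : ℝ) : ℝ :=
  3 * (1 + 1 / η) + 3 * localConst d γ η + (d - 3) * (1 / (η * hardyConst d)) + 2 / γ
    + 1 / (η * hardyConst d)

namespace ResolventSolution

variable {γ η ε τ : ℝ} {V : Ed d → ℝ} {u f : Ed d → ℂ}

lemma nX2_gradSq_le (h : ResolventSolution ε τ V u f) (hV : IsRepulsive γ η V) (hd : 3 < d)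
    (hγ : 0 ≤ γ) (hη : 0 < η) :
    nX2 (gradSq u) ≤ ENNReal.ofReal (3 * (1 + 1 / η) * morawetzSource ε u f) := by
  rw [gradSq_eq_ofReal, mul_assoc]
  exact nX2_le_of_lintegral_ballWeight_le (fun x => sq_nonneg _) fun R hR =>
    h.lintegral_ballWeight_mul_gradNorm_sq_le hV hd hγ hη hR

lemma nX2_energy_le (h : ResolventSolution ε τ V u f) (hV : IsRepulsive γ η V) (hd : 3 < d)
    (hγ : 0 < γ) (hη : 0 < η) :
    ENNReal.ofReal (max 0 τ) * nX2 (usq u) ≤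
      ENNReal.ofReal (3 * localConst d γ η * morawetzSource ε u f) := by
  have hτ : 0 ≤ max 0 τ := le_max_left _ _
  rw [← nX2_const_mul _ ENNReal.ofReal_ne_top, usq_eq_ofReal, mul_assoc]
  simp only [← ENNReal.ofReal_mul hτ]
  refine nX2_le_of_lintegral_ballWeight_le (fun x => by positivity) fun R hR => ?_
  simp only [mul_left_comm (ballWeight R _)]
  exact h.lintegral_energy_ballWeight_le hV hd hγ hη hR

lemma nX2_energy_add_charge_le (h : ResolventSolution ε τ V u f) (hV : IsRepulsive γ η V)
    (hd : 3 < d) (hγ : 0 < γ) (hη : 0 < η) :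
    nX2 (fun x => ENNReal.ofReal ((max 0 τ + |ε|) * ‖u x‖ ^ 2)) ≤
      ENNReal.ofReal (3 * (2 * localConst d γ η) * morawetzSource ε u f) := by
  have hG := mul_nonneg (localConst_pos hd hγ hη).le (morawetzSource_nonneg ε u f)
  rw [mul_assoc 3]
  refine nX2_le_of_lintegral_ballWeight_le (fun x => by positivity) fun R hR => ?_
  have he := (contDiff_ballWeight (E := Ed d) hR (n := 0)).continuous.measurable
  have hum := h.measurable
  calc ∫⁻ x, ENNReal.ofReal (ballWeight R x * ((max 0 τ + |ε|) * ‖u x‖ ^ 2))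
      = (∫⁻ x, ENNReal.ofReal (max 0 τ * (ballWeight R x * ‖u x‖ ^ 2)))
        + ∫⁻ x, ENNReal.ofReal (|ε| * (ballWeight R x * ‖u x‖ ^ 2)) := by
        rw [← lintegral_add_left (by fun_prop)]
        refine lintegral_congr fun x => ?_
        have := ballWeight_nonneg hR x
        rw [← ENNReal.ofReal_add (by positivity) (by positivity)]
        congr 1
        ring
    _ ≤ ENNReal.ofReal (localConst d γ η * morawetzSource ε u f)
        + ENNReal.ofReal (localConst d γ η * morawetzSource ε u f) :=
        add_le_add (h.lintegral_energy_ballWeight_le hV hd hγ hη hR)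
          (h.lintegral_charge_ballWeight_le hV hd hγ hη hR)
    _ = ENNReal.ofReal (2 * localConst d γ η * morawetzSource ε u f) := by
        rw [← ENNReal.ofReal_add hG hG]
        congr 1
        ring

lemma lintegral_usq_div_norm_cube_le (h : ResolventSolution ε τ V u f) (hV : IsRepulsive γ η V)
    (hd : 3 < d) (hγ : 0 ≤ γ) (hη : 0 < η) :
    ∫⁻ x, usq u x / ENNReal.ofReal (‖x‖ ^ 3) ≤
      ENNReal.ofReal (1 / (η * hardyConst d) * morawetzSource ε u f) := by
  refine le_trans (le_of_eq ?_)
    (ENNReal.ofReal_le_ofReal (h.integral_sq_div_norm_cube_le hV hd hγ hη))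
  rw [ofReal_integral_eq_lintegral_ofReal (h.integrable_sq_div_norm_pow hd)
    (.of_forall fun x => by positivity), usq_eq_ofReal]
  refine lintegral_congr_ae ?_
  filter_upwards [ae_ne_zero (by omega : 0 < d)] with x hx
  rw [ENNReal.ofReal_div_of_pos (pow_pos (norm_pos_iff.2 hx) 3)]

lemma lintegral_potential_div_norm_mul_usq_le (h : ResolventSolution ε τ V u f)
    (hV : IsRepulsive γ η V) (hd : 3 < d) (hγ : 0 < γ) (hη : 0 ≤ η) :
    ∫⁻ x, ENNReal.ofReal (V x / ‖x‖) * usq u x ≤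
      ENNReal.ofReal (2 / γ * morawetzSource ε u f) := by
  refine le_trans (le_of_eq (lintegral_congr fun x => ?_))
    (h.lintegral_potential_div_norm_le hV hd hγ hη)
  rw [usq_eq_ofReal, ← ENNReal.ofReal_mul (div_nonneg (h.potential_nonneg x) (norm_nonneg _)),
    div_mul_eq_mul_div]

lemma nX2_sq_div_norm_le (h : ResolventSolution ε τ V u f) (hV : IsRepulsive γ η V) (hd : 3 < d)
    (hγ : 0 ≤ γ) (hη : 0 < η) :
    nX2 (fun x => ENNReal.ofReal ((‖u x‖ / ‖x‖) ^ 2)) ≤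
      ENNReal.ofReal (1 / (η * hardyConst d) * morawetzSource ε u f) := by
  refine iSup₂_le fun R hR => le_trans ?_ (h.lintegral_usq_div_norm_cube_le hV hd hγ hη)
  have hball := inv_pow_mul_setLIntegral_ball_le
    (fun x : Ed d => ENNReal.ofReal ((‖u x‖ / ‖x‖) ^ 2)) 1 hR
  rw [pow_one R] at hball
  refine hball.trans_eq (lintegral_congr_ae ?_)
  filter_upwards [ae_ne_zero (by omega : 0 < d)] with x hx
  rw [usq_eq_ofReal, ← ENNReal.ofReal_div_of_pos (by positivity),
    ← ENNReal.ofReal_div_of_pos (by positivity), div_pow, div_div, ← pow_add]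

lemma two_mul_integral_norm_mul_gradNorm_le (h : ResolventSolution ε τ V u f) (c : ℝ) :
    2 * c * ∫ x, ‖u x‖ * gradNorm u x ≤
      c ^ 2 * (∫ x, ‖u x‖ ^ 2) + ∫ x, gradNorm u x ^ 2 := by
  rw [← integral_const_mul, ← integral_const_mul,
    ← integral_add (h.integrable_sq.const_mul _) h.integrable_gradNorm_sq]
  refine integral_mono (h.integrable_norm_mul_gradNorm.const_mul _)
    ((h.integrable_sq.const_mul _).add h.integrable_gradNorm_sq) fun x => ?_
  linarith [two_mul_le_add_sq (c * ‖u x‖) (gradNorm u x)]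

lemma abs_mul_integral_norm_mul_gradNorm_le (h : ResolventSolution ε τ V u f) (hd : 2 < d) :
    |ε| * ∫ x, ‖u x‖ * gradNorm u x ≤ √(max 0 τ + |ε|) * ∫ x, ‖f x‖ * ‖u x‖ := by
  rcases eq_or_ne ε 0 with rfl | hε
  · rw [abs_zero, zero_mul]
    positivity
  have hε0 : 0 < |ε| := abs_pos.2 hε
  have hτ : 0 ≤ max 0 τ := le_max_left _ _
  have hlam : 0 < √(max 0 τ + |ε|) := Real.sqrt_pos.2 (by positivity)
  have hlam_sq : √(max 0 τ + |ε|) ^ 2 = max 0 τ + |ε| := Real.sq_sqrt (by positivity)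
  set lam := √(max 0 τ + |ε|)
  have hcharge := h.abs_mul_integral_sq_le hd
  have hgradient : |ε| * ∫ x, gradNorm u x ^ 2 ≤ lam ^ 2 * ∫ x, ‖f x‖ * ‖u x‖ := by
    rw [hlam_sq]
    linarith [mul_le_mul_of_nonneg_left (h.integral_gradNorm_sq_le hd) hε0.le,
      mul_le_mul_of_nonneg_left hcharge hτ]
  have hmass : lam ^ 2 * (|ε| * ∫ x, ‖u x‖ ^ 2) ≤ lam ^ 2 * ∫ x, ‖f x‖ * ‖u x‖ := by gcongr
  have hyoung := mul_le_mul_of_nonneg_left (h.two_mul_integral_norm_mul_gradNorm_le lam) hε0.le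
  refine le_of_mul_le_mul_left ?_ hlam
  linarith

lemma integral_source_mul_gradNorm_le (h : ResolventSolution ε τ V u f) (hV : IsRepulsive γ η V)
    (hd : 3 < d) (hγ : 0 ≤ γ) (hη : 0 < η) {N : ℝ} (hN0 : 0 ≤ N)
    (hN : nXstar (usq f) ≤ ENNReal.ofReal N) :
    ∫ x, ‖f x‖ * gradNorm u x ≤ √(2 * (3 * (1 + 1 / η))) * N * √(morawetzSource ε u f) := by
  have hgrad := h.nX2_gradSq_le hV hd hγ hη
  rw [usq_eq_ofReal] at hN
  rw [gradSq_eq_ofReal] at hgrad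
  exact integral_mul_le_of_nXstar_le_of_nX2_le (by omega) h.measurable_source.norm
    h.measurable_gradNorm (fun x => norm_nonneg _) (gradNorm_nonneg u)
    h.integrable_source_mul_gradNorm hN0 hN (by positivity) (morawetzSource_nonneg ε u f) hgrad

lemma integral_source_mul_div_norm_le (h : ResolventSolution ε τ V u f) (hV : IsRepulsive γ η V)
    (hd : 3 < d) (hγ : 0 ≤ γ) (hη : 0 < η) {N : ℝ} (hN0 : 0 ≤ N)
    (hN : nXstar (usq f) ≤ ENNReal.ofReal N) :
    ∫ x, ‖f x‖ * ‖u x‖ / ‖x‖ ≤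
      √(2 * (1 / (η * hardyConst d))) * N * √(morawetzSource ε u f) := by
  have hκ := hardyConst_pos hd
  have hum := h.measurable
  have hintegrable := h.integrable_source_mul_div_norm (by omega)
  rw [usq_eq_ofReal] at hN
  simp only [mul_div_assoc] at hintegrable ⊢
  exact integral_mul_le_of_nXstar_le_of_nX2_le (by omega) h.measurable_source.norm (by fun_prop)
    (fun x => norm_nonneg _) (fun x => by positivity) hintegrable hN0 hN (by positivity)
    (morawetzSource_nonneg ε u f) (h.nX2_sq_div_norm_le hV hd hγ hη)

lemma abs_mul_integral_norm_mul_gradNorm_le_mul_sqrt (h : ResolventSolution ε τ V u f)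
    (hV : IsRepulsive γ η V) (hd : 3 < d) (hγ : 0 < γ) (hη : 0 < η) {N : ℝ} (hN0 : 0 ≤ N)
    (hN : nXstar (usq f) ≤ ENNReal.ofReal N) :
    |ε| * ∫ x, ‖u x‖ * gradNorm u x ≤
      √(2 * (3 * (2 * localConst d γ η))) * N * √(morawetzSource ε u f) := by
  have hloc := localConst_pos hd hγ hη
  have hum := h.measurable
  have hlam_sq : √(max 0 τ + |ε|) ^ 2 = max 0 τ + |ε| := Real.sq_sqrt (by positivity)
  have henergy : nX2 (fun x => ENNReal.ofReal ((√(max 0 τ + |ε|) * ‖u x‖) ^ 2)) ≤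
      ENNReal.ofReal (3 * (2 * localConst d γ η) * morawetzSource ε u f) := by
    simpa only [mul_pow, hlam_sq] using h.nX2_energy_add_charge_le hV hd hγ hη
  have hintegrable := h.integrable_source_mul.const_mul √(max 0 τ + |ε|)
  rw [usq_eq_ofReal] at hN
  refine (h.abs_mul_integral_norm_mul_gradNorm_le (by omega)).trans ?_
  rw [← integral_const_mul]
  simp only [mul_left_comm √(max 0 τ + |ε|)] at hintegrable ⊢
  exact integral_mul_le_of_nXstar_le_of_nX2_le (by omega) h.measurable_source.norm (by fun_prop)
    (fun x => norm_nonneg _) (fun x => by positivity) hintegrable hN0 hN (by positivity)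
    (morawetzSource_nonneg ε u f) henergy

lemma morawetzSource_le (h : ResolventSolution ε τ V u f) (hV : IsRepulsive γ η V) (hd : 3 < d)
    (hγ : 0 < γ) (hη : 0 < η) {N : ℝ} (hN0 : 0 ≤ N) (hN : nXstar (usq f) ≤ ENNReal.ofReal N) :
    morawetzSource ε u f ≤ (sourceConst d γ η * N) ^ 2 := by
  refine le_sq_of_le_mul_sqrt (morawetzSource_nonneg ε u f) ?_
  calc morawetzSource ε u f
      ≤ √(2 * (3 * (1 + 1 / η))) * N * √(morawetzSource ε u f)
        + d / 2 * (√(2 * (1 / (η * hardyConst d))) * N * √(morawetzSource ε u f))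
        + √(2 * (3 * (2 * localConst d γ η))) * N * √(morawetzSource ε u f) := by
        conv_lhs => unfold morawetzSource
        refine add_le_add (add_le_add ?_ (mul_le_mul_of_nonneg_left ?_ (by positivity))) ?_
        · exact h.integral_source_mul_gradNorm_le hV hd hγ.le hη hN0 hN
        · exact h.integral_source_mul_div_norm_le hV hd hγ.le hη hN0 hN
        · exact h.abs_mul_integral_norm_mul_gradNorm_le_mul_sqrt hV hd hγ hη hN0 hN
    _ = sourceConst d γ η * N * √(morawetzSource ε u f) := by rw [sourceConst]; ring

lemma estimate_le_morawetzSource (h : ResolventSolution ε τ V u f) (hV : IsRepulsive γ η V)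
    (hd : 3 < d) (hγ : 0 < γ) (hη : 0 < η) :
    nX2 (gradSq u) + ENNReal.ofReal (max 0 τ) * nX2 (usq u)
        + ENNReal.ofReal ((d : ℝ) - 3) * (∫⁻ x, usq u x / ENNReal.ofReal (‖x‖ ^ 3))
        + (∫⁻ x, ENNReal.ofReal (V x / ‖x‖) * usq u x)
        + (⨆ (R : ℝ) (_ : 0 < R),
          (ENNReal.ofReal (R ^ 3))⁻¹ * ∫⁻ x in ball (0 : Ed d) R, usq u x) ≤
      ENNReal.ofReal (estimateConst d γ η * morawetzSource ε u f) := by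
  have hκ := hardyConst_pos hd
  have hloc := localConst_pos hd hγ hη
  have hG := morawetzSource_nonneg ε u f
  have hd3 : 0 ≤ (d : ℝ) - 3 := sub_nonneg.2 (by exact_mod_cast hd.le)
  have hcube := h.lintegral_usq_div_norm_cube_le hV hd hγ.le hη
  have hball : (⨆ (R : ℝ) (_ : 0 < R),
      (ENNReal.ofReal (R ^ 3))⁻¹ * ∫⁻ x in ball (0 : Ed d) R, usq u x) ≤
      ENNReal.ofReal (1 / (η * hardyConst d) * morawetzSource ε u f) :=
    iSup₂_le fun R hR => (inv_pow_mul_setLIntegral_ball_le _ 3 hR).trans hcube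
  have hweighted : ENNReal.ofReal ((d : ℝ) - 3) * (∫⁻ x, usq u x / ENNReal.ofReal (‖x‖ ^ 3)) ≤
      ENNReal.ofReal ((d - 3) * (1 / (η * hardyConst d) * morawetzSource ε u f)) := by
    rw [ENNReal.ofReal_mul hd3]
    gcongr
  refine (add_le_add (add_le_add (add_le_add (add_le_add (h.nX2_gradSq_le hV hd hγ.le hη)
    (h.nX2_energy_le hV hd hγ hη)) hweighted)
    (h.lintegral_potential_div_norm_mul_usq_le hV hd hγ hη.le)) hball).trans_eq ?_
  rw [← ENNReal.ofReal_add (by positivity) (by positivity),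
    ← ENNReal.ofReal_add (by positivity) (by positivity),
    ← ENNReal.ofReal_add (by positivity) (by positivity),
    ← ENNReal.ofReal_add (by positivity) (by positivity), estimateConst]
  congr 1
  ring

lemma morawetzSource_le_nXstar (h : ResolventSolution ε τ V u f) (hV : IsRepulsive γ η V)
    (hd : 3 < d) (hγ : 0 < γ) (hη : 0 < η) (hf : nXstar (usq f) ≠ ⊤) :
    ENNReal.ofReal (morawetzSource ε u f) ≤
      ENNReal.ofReal (sourceConst d γ η ^ 2) * nXstar (usq f) ^ 2 := by
  have hN := h.morawetzSource_le hV hd hγ hη ENNReal.toReal_nonneg (ENNReal.ofReal_toReal hf).ge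
  refine (ENNReal.ofReal_le_ofReal hN).trans_eq ?_
  rw [mul_pow, ENNReal.ofReal_mul (sq_nonneg _), ENNReal.ofReal_pow ENNReal.toReal_nonneg,
    ENNReal.ofReal_toReal hf]

end ResolventSolution

end Estimates

section Reduction

variable {d : ℕ}

lemma estimateConst_nonneg {γ η : ℝ} (hd : 3 < d) (hγ : 0 < γ) (hη : 0 < η) :
    0 ≤ estimateConst d γ η := by
  have := hardyConst_pos hd
  have := localConst_pos hd hγ hη
  have : 0 ≤ (d : ℝ) - 3 := sub_nonneg.2 (by exact_mod_cast hd.le)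
  unfold estimateConst
  positivity

lemma isRepulsive_of_radialDeriv_le {γ η : ℝ} {V : Ed d → ℝ}
    (hV : ∀ x, x ≠ 0 → γ * V x + ‖x‖ * radialDeriv V x ≤
      (1 - η) * ((d : ℝ) - 1) * ((d : ℝ) - 3) / (2 * ‖x‖ ^ 2)) :
    IsRepulsive γ η V := fun x hx => by
  simpa only [radialDeriv, eulerDeriv, mul_div_cancel₀ _ (norm_ne_zero_iff.2 hx)] using hV x hx

lemma resolventSolution_of_lintegral_lt_top {ε τ : ℝ} {V : Ed d → ℝ} {u f : Ed d → ℂ}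
    (hV0 : ∀ x, 0 ≤ V x) (hV : ContDiffOn ℝ 1 V {0}ᶜ) (hu : ContDiff ℝ 2 u)
    (hu2 : ∫⁻ x, usq u x < ⊤) (hgrad2 : ∫⁻ x, gradSq u x < ⊤) (hf2 : ∫⁻ x, usq f x < ⊤)
    (heq : ∀ x, -lap u x + V x * u x + ε * Complex.I * u x - τ * u x = f x) :
    ResolventSolution ε τ V u f := by
  have hVm := measurable_of_continuousOn_compl_singleton 0 hV.continuousOn
  have integrable_sq {g : Ed d → ℝ} (hg : Measurable g)
      (hfin : ∫⁻ x, ENNReal.ofReal (g x ^ 2) < ⊤) : Integrable fun x => g x ^ 2 :=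
    ⟨(hg.pow_const 2).aestronglyMeasurable,
      (hasFiniteIntegral_iff_ofReal (.of_forall fun x => sq_nonneg _)).2 hfin⟩
  rw [usq_eq_ofReal] at hu2 hf2
  rw [gradSq_eq_ofReal] at hgrad2
  exact ⟨hV0, hV, hu, heq, integrable_sq hu.continuous.norm.measurable hu2,
    integrable_sq (continuous_gradNorm (hu.of_le (by norm_num))).measurable hgrad2,
    integrable_sq (measurable_source_of_equation hVm hu heq).norm hf2⟩

end Reduction

/-- a priori estimate for the resolvent equation with a repulsive
potential in dimension d > 3. -/
theorem stmt_0 (d : ℕ) (hd : 3 < d) (γ η : ℝ) (hγ : 0 < γ) (hη : 0 < η) :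
    ∃ C : ℝ, 0 < C ∧
      ∀ (V : Ed d → ℝ), (∀ x, 0 ≤ V x) → ContDiffOn ℝ 1 V ({(0 : Ed d)}ᶜ) →
      (∀ x : Ed d, x ≠ 0 →
        γ * V x + ‖x‖ * radialDeriv V x ≤ (1 - η) * ((d:ℝ) - 1) * ((d:ℝ) - 3) / (2 * ‖x‖^2)) →
      ∀ (ε τ : ℝ), ε ≠ 0 →
      ∀ (σ : ℝ), σ = 1 ∨ σ = -1 →
      ∀ (u f : Ed d → ℂ), ContDiff ℝ 2 u →
      (∫⁻ x, usq u x) < ⊤ → (∫⁻ x, gradSq u x) < ⊤ → (∫⁻ x, usq f x) < ⊤ →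
      (∀ x, -lap u x + (V x : ℂ) * u x + (σ : ℂ) * ((ε : ℂ) * Complex.I) * u x
        - (τ : ℂ) * u x = f x) →
      nX2 (gradSq u)
        + ENNReal.ofReal (max 0 τ) * nX2 (usq u)
        + ENNReal.ofReal ((d:ℝ) - 3) * (∫⁻ x, usq u x / ENNReal.ofReal (‖x‖^3))
        + (∫⁻ x, ENNReal.ofReal (V x / ‖x‖) * usq u x)
        + (⨆ (R : ℝ) (_ : 0 < R),
            (ENNReal.ofReal (R^3))⁻¹ * ∫⁻ x in ball (0 : Ed d) R, usq u x)
      ≤ ENNReal.ofReal C * (nXstar (usq f)) ^ 2 := by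
  -- The maximum with `1` keeps the bound true when `‖f‖_{X*}` is infinite.
  refine ⟨max 1 (estimateConst d γ η * sourceConst d γ η ^ 2), lt_max_of_lt_left one_pos, ?_⟩
  intro V hV0 hVdiff hrep ε τ _ σ _ u f hu hu2 hgrad2 hf2 heq
  have hV := isRepulsive_of_radialDeriv_le hrep
  have h : ResolventSolution (σ * ε) τ V u f :=
    resolventSolution_of_lintegral_lt_top hV0 hVdiff hu hu2 hgrad2 hf2 fun x => by
      rw [← heq x]
      push_cast
      ring
  rcases eq_or_ne (nXstar (usq f)) ⊤ with hf | hf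
  · rw [hf, ENNReal.top_pow two_ne_zero, ENNReal.mul_top (by simp)]
    exact le_top
  refine (h.estimate_le_morawetzSource hV hd hγ hη).trans ?_
  have hL := estimateConst_nonneg hd hγ hη
  calc _ ≤ ENNReal.ofReal (estimateConst d γ η)
          * (ENNReal.ofReal (sourceConst d γ η ^ 2) * nXstar (usq f) ^ 2) := by
        rw [ENNReal.ofReal_mul hL]
        gcongr
        exact h.morawetzSource_le_nXstar hV hd hγ hη hf
    _ = ENNReal.ofReal (estimateConst d γ η * sourceConst d γ η ^ 2) * nXstar (usq f) ^ 2 := by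
        rw [ENNReal.ofReal_mul hL, mul_assoc]
    _ ≤ _ := by
        gcongr
        exact le_max_right _ _
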